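/- Let R > 0, C > 0, and let v be a C² function on the punctured disk {z ∈ ℝ² : 0 < |z| < R} that is bounded from below and satisfies 0 ≤ -Δv ≤ C·e^{2v} there. Then either v extends to a C¹ function on a neighborhood of the origin, or there exists a finite positive number m₁ such that v(z)/log(1/|z|) → m₁ as |z| → 0⁺. -/

import Mathlib

open MeasureTheory Filter Metric
open scoped ENNReal

/-- The Euclidean Laplacian of a function on `ℝ²`:
`Δv = ∂²v/∂x² + ∂²v/∂y²`. -/
noncomputable def lap (v : EuclideanSpace ℝ (Fin 2) → ℝ)
    (z : EuclideanSpace ℝ (Fin 2)) : ℝ :=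
  fderiv ℝ (fun w => fderiv ℝ v w (EuclideanSpace.single 0 1)) z (EuclideanSpace.single 0 1) +
  fderiv ℝ (fun w => fderiv ℝ v w (EuclideanSpace.single 1 1)) z (EuclideanSpace.single 1 1)

open InnerProductSpace Module Set Topology
open scoped Laplacian Gradient

/-! After subtracting a constant, `v ≥ 0` is superharmonic on a punctured disk of radius at
most `1`. Testing `-Δv ≥ 0` against strictly convex functions of `log |x|⁻¹` that vanish near
the origin shows that `v / |x|` and `Δv` are integrable. Hence the distributional `-Δv` on the
whole disk is the integrable function `F = -Δv` plus a multiple of the Dirac mass at `0`, and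
testing against truncated logarithms gives `κ v = H + log|·|⁻¹ * F + M log |x|⁻¹` near `0`,
with `H` of class `C¹`.

If `v z` is almost maximal on a disk of radius comparable to `|z|`, then `F ≤ C e^{K v}`
bounds the potential of `F` at `z` by `ε (K v z + log |z|⁻¹) + O(1)`: split it at the radius
`e^{-K v z}` and use that `F` has small mass near `0`. So `v / log |x|⁻¹ → M / κ`. If this
limit is `0`, then `F ≤ C e^{o(log |x|⁻¹)} ≤ C |x|^{-1/2}` is in `L³`, and its logarithmic
potential is `C¹`. -/

section Calculus

variable {E : Type*} [NormedAddCommGroup E] [InnerProductSpace ℝ E]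
  {u v : E → ℝ} {x : E} {g : ℝ → ℝ}

lemma differentiableAt_fderiv (hu : ContDiffAt ℝ 2 u x) : DifferentiableAt ℝ (fderiv ℝ u) x :=
  (hu.fderiv_right (m := 1) (by norm_num)).differentiableAt one_ne_zero

lemma eventually_differentiableAt (hu : ContDiffAt ℝ 2 u x) : ∀ᶠ y in 𝓝 x, DifferentiableAt ℝ u y :=
  (hu.eventually (by simp)).mono fun _ hy => hy.differentiableAt two_ne_zero

lemma fderiv_comp_eq_smul (hg : DifferentiableAt ℝ g (u x)) (hu : DifferentiableAt ℝ u x) :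
    fderiv ℝ (fun y => g (u y)) x = deriv g (u x) • fderiv ℝ u x :=
  (hg.hasDerivAt.comp_hasFDerivAt x hu.hasFDerivAt).fderiv

variable [FiniteDimensional ℝ E]

lemma laplacian_eq_sum_fderiv_fderiv {ι : Type*} [Fintype ι] (b : OrthonormalBasis ι ℝ E)
    (u : E → ℝ) (x : E) : Δ u x = ∑ i, fderiv ℝ (fderiv ℝ u) x (b i) (b i) := by
  simp [laplacian_eq_iteratedFDeriv_orthonormalBasis u b, iteratedFDeriv_two_apply]

lemma contDiffAt_laplacian {m n : WithTop ℕ∞} (hu : ContDiffAt ℝ n u x) (hmn : m + 2 ≤ n) :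
    ContDiffAt ℝ m (Δ u) x := by
  have hfst : ContDiffAt ℝ (m + 1) (fderiv ℝ u) x :=
    hu.fderiv_right (by rwa [add_assoc, one_add_one_eq_two])
  rw [funext (laplacian_eq_sum_fderiv_fderiv (stdOrthonormalBasis ℝ E) u)]
  exact ContDiffAt.sum fun i _ =>
    ((hfst.fderiv_right le_rfl).clm_apply contDiffAt_const).clm_apply contDiffAt_const

lemma continuousAt_laplacian (hu : ContDiffAt ℝ 2 u x) : ContinuousAt (Δ u) x :=
  (contDiffAt_laplacian (m := 0) hu (by simp)).continuousAt

lemma norm_gradient (u : E → ℝ) (x : E) : ‖∇ u x‖ = ‖fderiv ℝ u x‖ := by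
  rw [← toDual_gradient, LinearIsometryEquiv.norm_map]

lemma inner_gradient_eq_sum {ι : Type*} [Fintype ι] (b : OrthonormalBasis ι ℝ E)
    (u v : E → ℝ) (x : E) :
    ⟪∇ u x, ∇ v x⟫_ℝ = ∑ i, fderiv ℝ u x (b i) * fderiv ℝ v x (b i) := by
  rw [← b.sum_inner_mul_inner]
  simp [inner_gradient_left, inner_gradient_right]

lemma laplacian_mul (hu : ContDiffAt ℝ 2 u x) (hv : ContDiffAt ℝ 2 v x) :
    Δ (fun y => u y * v y) x = u x * Δ v x + v x * Δ u x + 2 * ⟪∇ u x, ∇ v x⟫_ℝ := by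
  have hfst : fderiv ℝ (fun y => u y * v y) =ᶠ[𝓝 x]
      fun y => u y • fderiv ℝ v y + v y • fderiv ℝ u y := by
    filter_upwards [eventually_differentiableAt hu, eventually_differentiableAt hv] with y hy hy'
    exact fderiv_fun_mul hy hy'
  have du := (hu.differentiableAt two_ne_zero).hasFDerivAt
  have dv := (hv.differentiableAt two_ne_zero).hasFDerivAt
  have hsnd : fderiv ℝ (fderiv ℝ fun y => u y * v y) x = _ :=
    hfst.fderiv_eq.trans ((du.smul (differentiableAt_fderiv hv).hasFDerivAt).add
      (dv.smul (differentiableAt_fderiv hu).hasFDerivAt)).fderiv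
  have b := stdOrthonormalBasis ℝ E
  simp only [laplacian_eq_sum_fderiv_fderiv b, inner_gradient_eq_sum b, Finset.mul_sum,
    ← Finset.sum_add_distrib, hsnd]
  refine Finset.sum_congr rfl fun i _ => ?_
  simp
  ring

lemma gradient_comp (hg : DifferentiableAt ℝ g (u x)) (hu : DifferentiableAt ℝ u x) :
    ∇ (fun y => g (u y)) x = deriv g (u x) • ∇ u x := by
  simp [gradient, fderiv_comp_eq_smul hg hu]

lemma laplacian_comp (hg : ContDiffAt ℝ 2 g (u x)) (hu : ContDiffAt ℝ 2 u x) :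
    Δ (fun y => g (u y)) x = deriv (deriv g) (u x) * ‖∇ u x‖ ^ 2 + deriv g (u x) * Δ u x := by
  have hfst : fderiv ℝ (fun y => g (u y)) =ᶠ[𝓝 x] fun y => deriv g (u y) • fderiv ℝ u y := by
    filter_upwards [eventually_differentiableAt hu,
      hu.continuousAt.eventually (eventually_differentiableAt hg)] with y hy hgy
    exact fderiv_comp_eq_smul hgy hy
  have du := (hu.differentiableAt two_ne_zero).hasFDerivAt
  have dg' : DifferentiableAt ℝ (deriv g) (u x) :=
    (differentiableAt_fderiv hg).clm_apply (differentiableAt_const 1)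
  have hsnd : fderiv ℝ (fderiv ℝ fun y => g (u y)) x = _ :=
    hfst.fderiv_eq.trans ((dg'.hasDerivAt.comp_hasFDerivAt x du).smul
      (differentiableAt_fderiv hu).hasFDerivAt).fderiv
  have b := stdOrthonormalBasis ℝ E
  simp only [laplacian_eq_sum_fderiv_fderiv b, ← real_inner_self_eq_norm_sq,
    inner_gradient_eq_sum b, Finset.mul_sum, ← Finset.sum_add_distrib, hsnd]
  refine Finset.sum_congr rfl fun i _ => ?_
  simp
  ring

lemma laplacian_comp_sub (u : E → ℝ) (c x : E) : Δ (fun y => u (y - c)) x = Δ u (x - c) := by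
  have hfst : fderiv ℝ (fun y => u (y - c)) = fun y => fderiv ℝ u (y - c) :=
    funext fun y => fderiv_comp_sub c
  simp only [laplacian_eq_sum_fderiv_fderiv (stdOrthonormalBasis ℝ E), hfst, fderiv_comp_sub]

lemma gradient_norm_sq (x : E) : ∇ (fun y : E => ‖y‖ ^ 2) x = (2 : ℝ) • x := by
  refine HasGradientAt.gradient ?_
  rw [hasGradientAt_iff_hasFDerivAt]
  exact (hasStrictFDerivAt_norm_sq x).hasFDerivAt.congr_fderiv (by ext; simp)

lemma laplacian_norm_sq (x : E) : Δ (fun y : E => ‖y‖ ^ 2) x = 2 * finrank ℝ E := by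
  let L : E →L[ℝ] E →L[ℝ] ℝ := innerSL ℝ
  have hfst : fderiv ℝ (fun y : E => ‖y‖ ^ 2) = fun y => (2 : ℝ) • L y :=
    funext fun y => (hasStrictFDerivAt_norm_sq y).hasFDerivAt.fderiv.trans (two_nsmul _ |>.trans
      (two_smul ℝ _).symm)
  have hL (e : E) : L e e = ‖e‖ ^ 2 := real_inner_self_eq_norm_sq e
  simp [laplacian_eq_sum_fderiv_fderiv (stdOrthonormalBasis ℝ E), hfst,
    fderiv_fun_const_smul L.differentiableAt, hL, mul_comm]

end Calculus

section ExtensionByZero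

variable {E : Type*} [NormedAddCommGroup E] {U K : Set E} {f : E → ℝ}

lemma tsupport_indicator_subset (hK : IsClosed K) (h0 : EqOn f 0 (U \ K)) :
    tsupport (U.indicator f) ⊆ K := by
  refine closure_minimal (fun x hx => by_contra fun hxK => hx ?_) hK
  by_cases hxU : x ∈ U
  · simpa [hxU] using h0 ⟨hxU, hxK⟩
  · simp [hxU]

lemma hasCompactSupport_indicator (hK : IsCompact K) (h0 : EqOn f 0 (U \ K)) :
    HasCompactSupport (U.indicator f) :=
  hK.of_isClosed_subset (isClosed_tsupport _) (tsupport_indicator_subset hK.isClosed h0)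

variable [NormedSpace ℝ E]

lemma contDiff_indicator {n : WithTop ℕ∞} (hU : IsOpen U) (hf : ContDiffOn ℝ n f U)
    (hK : IsClosed K) (hKU : K ⊆ U) (h0 : EqOn f 0 (U \ K)) : ContDiff ℝ n (U.indicator f) := by
  refine contDiff_iff_contDiffAt.2 fun x => ?_
  by_cases hx : x ∈ U
  · exact (hf.contDiffAt (hU.mem_nhds hx)).congr_of_eventuallyEq
      (eqOn_indicator.eventuallyEq_of_mem (hU.mem_nhds hx))
  · have hxK : x ∉ tsupport (U.indicator f) := fun h => hx (hKU (tsupport_indicator_subset hK h0 h))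
    exact (contDiffAt_const (c := (0 : ℝ))).congr_of_eventuallyEq
      (notMem_tsupport_iff_eventuallyEq.1 hxK)

variable [MeasurableSpace E] [BorelSpace E]

lemma integrableOn_of_eqOn_zero {μ : Measure E} [IsFiniteMeasureOnCompacts μ] (hU : IsOpen U)
    (hf : ContinuousOn f U) (hK : IsCompact K) (hKU : K ⊆ U) (h0 : EqOn f 0 (U \ K)) :
    IntegrableOn f U μ := by
  rw [← integrable_indicator_iff hU.measurableSet]
  exact (contDiff_indicator hU (contDiffOn_zero.2 hf) hK.isClosed hKU
    h0).continuous.integrable_of_hasCompactSupport (hasCompactSupport_indicator hK h0)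

variable [FiniteDimensional ℝ E] {μ : Measure E} [μ.IsAddHaarMeasure]

lemma integral_fderiv_apply_eq_zero (hf : ContDiff ℝ 1 f) (hc : HasCompactSupport f) (e : E) :
    ∫ x, fderiv ℝ f x e ∂μ = 0 := by
  have hint : Integrable (fun x => fderiv ℝ f x e) μ :=
    ((hf.continuous_fderiv one_ne_zero).clm_apply continuous_const).integrable_of_hasCompactSupport
      (hc.fderiv_apply ℝ e)
  have h := integral_mul_fderiv_eq_neg_fderiv_mul_of_integrable (μ := μ) (v := e)
    (f := fun _ : E => (1 : ℝ)) (g := f) (by simp) (by simpa using hint)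
    (by simpa using hf.continuous.integrable_of_hasCompactSupport hc)
    (fun x _ => differentiableAt_const 1) (fun x _ => hf.differentiable one_ne_zero x)
  simpa using h

lemma setIntegral_fderiv_apply_eq_zero (hU : IsOpen U) (hf : ContDiffOn ℝ 1 f U)
    (hK : IsCompact K) (hKU : K ⊆ U) (h0 : EqOn f 0 (U \ K)) (e : E) :
    ∫ x in U, fderiv ℝ f x e ∂μ = 0 := by
  have heq : EqOn (fun x => fderiv ℝ (U.indicator f) x e) (fun x => fderiv ℝ f x e) U :=
    fun x hx => congr($((eqOn_indicator.eventuallyEq_of_mem (hU.mem_nhds hx)).fderiv_eq) e)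
  have hzero : ∀ x ∉ U, fderiv ℝ (U.indicator f) x e = 0 := fun x hx => by
    have hxK := mt (tsupport_fderiv_subset (𝕜 := ℝ) (f := U.indicator f) ·)
      fun h => hx (hKU (tsupport_indicator_subset hK.isClosed h0 h))
    rw [image_eq_zero_of_notMem_tsupport hxK, zero_apply]
  rw [← setIntegral_congr_fun hU.measurableSet heq,
    setIntegral_eq_integral_of_forall_compl_eq_zero hzero]
  exact integral_fderiv_apply_eq_zero (contDiff_indicator hU hf hK.isClosed hKU h0)
    (hasCompactSupport_indicator hK h0) e

end ExtensionByZero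

section Green

variable {E : Type*} [NormedAddCommGroup E] [InnerProductSpace ℝ E]
  {U K : Set E} {u v : E → ℝ}

lemma eqOn_fderiv_zero (hU : IsOpen U) (hK : IsClosed K) (h0 : EqOn u 0 (U \ K)) :
    EqOn (fderiv ℝ u) 0 (U \ K) := fun x hx => by
  have heq : u =ᶠ[𝓝 x] fun _ => 0 := h0.eventuallyEq_of_mem ((hU.sdiff hK).mem_nhds hx)
  simp [heq.fderiv_eq]

lemma fderiv_flux_apply {x : E} (hu : ContDiffAt ℝ 2 u x) (hv : ContDiffAt ℝ 2 v x) (e : E) :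
    fderiv ℝ (fun y => v y * fderiv ℝ u y e - u y * fderiv ℝ v y e) x e =
      v x * fderiv ℝ (fderiv ℝ u) x e e - u x * fderiv ℝ (fderiv ℝ v) x e e := by
  have du := hu.differentiableAt two_ne_zero |>.hasFDerivAt
  have dv := hv.differentiableAt two_ne_zero |>.hasFDerivAt
  have du' := (differentiableAt_fderiv hu).hasFDerivAt.clm_apply (hasFDerivAt_const e x)
  have dv' := (differentiableAt_fderiv hv).hasFDerivAt.clm_apply (hasFDerivAt_const e x)
  refine congr($(((dv.mul du').sub (du.mul dv')).fderiv) e).trans ?_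
  simp
  ring

variable [FiniteDimensional ℝ E]

lemma eqOn_laplacian_zero (hU : IsOpen U) (hK : IsClosed K) (h0 : EqOn u 0 (U \ K)) :
    EqOn (Δ u) 0 (U \ K) := fun x hx => by
  have heq : u =ᶠ[𝓝 x] fun _ => 0 := h0.eventuallyEq_of_mem ((hU.sdiff hK).mem_nhds hx)
  simp [laplacian_congr_nhds heq |>.eq_of_nhds]

lemma continuousOn_laplacian (hU : IsOpen U) (hu : ContDiffOn ℝ 2 u U) : ContinuousOn (Δ u) U :=
  fun _ hx => (continuousAt_laplacian (hu.contDiffAt (hU.mem_nhds hx))).continuousWithinAt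

lemma continuous_laplacian (hu : ContDiff ℝ 2 u) : Continuous (Δ u) :=
  continuousOn_univ.1 (continuousOn_laplacian isOpen_univ hu.contDiffOn)

variable [MeasurableSpace E] [BorelSpace E] {μ : Measure E} [μ.IsAddHaarMeasure]

/-- Green's identity: `v Δu - u Δv` is the divergence of `v ∇u - u ∇v`. -/
lemma setIntegral_mul_laplacian_comm (hU : IsOpen U) (hu : ContDiffOn ℝ 2 u U)
    (hv : ContDiffOn ℝ 2 v U) (hK : IsCompact K) (hKU : K ⊆ U) (h0 : EqOn u 0 (U \ K)) :
    IntegrableOn (fun x => v x * Δ u x) U μ ∧ IntegrableOn (fun x => u x * Δ v x) U μ ∧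
      ∫ x in U, v x * Δ u x ∂μ = ∫ x in U, u x * Δ v x ∂μ := by
  have hint₁ : IntegrableOn (fun x => v x * Δ u x) U μ :=
    integrableOn_of_eqOn_zero hU (hv.continuousOn.mul (continuousOn_laplacian hU hu)) hK hKU
      fun x hx => by simp [eqOn_laplacian_zero hU hK.isClosed h0 hx]
  have hint₂ : IntegrableOn (fun x => u x * Δ v x) U μ :=
    integrableOn_of_eqOn_zero hU (hu.continuousOn.mul (continuousOn_laplacian hU hv)) hK hKU
      fun x hx => by simp [h0 hx]
  refine ⟨hint₁, hint₂, sub_eq_zero.1 ?_⟩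
  let b := stdOrthonormalBasis ℝ E
  let W (e x : E) : ℝ := v x * fderiv ℝ u x e - u x * fderiv ℝ v x e
  have hW (e : E) : ContDiffOn ℝ 1 (W e) U := by
    have hu' := hu.fderiv_of_isOpen hU (m := 1) (by norm_num)
    have hv' := hv.fderiv_of_isOpen hU (m := 1) (by norm_num)
    have := hu.of_le one_le_two
    have := hv.of_le one_le_two
    fun_prop
  have hW0 (e : E) : EqOn (W e) 0 (U \ K) := fun x hx => by
    simp [W, h0 hx, eqOn_fderiv_zero hU hK.isClosed h0 hx]
  have hdiv : EqOn (fun x => v x * Δ u x - u x * Δ v x)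
      (fun x => ∑ i, fderiv ℝ (W (b i)) x (b i)) U := fun x hx => by
    simp only [W, fderiv_flux_apply (hu.contDiffAt (hU.mem_nhds hx))
      (hv.contDiffAt (hU.mem_nhds hx)), laplacian_eq_sum_fderiv_fderiv b, Finset.mul_sum,
      Finset.sum_sub_distrib]
  rw [← integral_sub hint₁ hint₂, setIntegral_congr_fun hU.measurableSet hdiv,
    integral_finsetSum _ fun i _ => ?_]
  · exact Finset.sum_eq_zero fun i _ => setIntegral_fderiv_apply_eq_zero hU (hW _) hK hKU (hW0 _) _
  · exact integrableOn_of_eqOn_zero hU (((hW _).continuousOn_fderiv_of_isOpen hU le_rfl).clm_apply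
      continuousOn_const) hK hKU fun x hx => by simp [eqOn_fderiv_zero hU hK.isClosed (hW0 _) hx]

end Green

section Cutoff

lemma hasDerivAt_max_zero_pow (n : ℕ) (t : ℝ) :
    HasDerivAt (fun t : ℝ => max t 0 ^ (n + 2)) ((n + 2) * max t 0 ^ (n + 1)) t := by
  rcases lt_trichotomy t 0 with ht | rfl | ht
  · have heq : (fun t : ℝ => max t 0 ^ (n + 2)) =ᶠ[𝓝 t] fun _ => 0 := by
      filter_upwards [gt_mem_nhds ht] with s hs
      simp [max_eq_right hs.le]
    rw [max_eq_right ht.le]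
    simpa using (hasDerivAt_const t (0 : ℝ)).congr_of_eventuallyEq heq
  · have hO : (fun t : ℝ => max t 0 ^ (n + 2)) =O[𝓝 0] fun t : ℝ => t ^ (n + 2) :=
      .of_bound 1 <| .of_forall fun s => by
        rcases le_total s 0 with h | h <;> simp [h]
    have ho : (fun t : ℝ => max t 0 ^ (n + 2)) =o[𝓝 0] fun t : ℝ => t :=
      hO.trans_isLittleO
        (by simpa using Asymptotics.isLittleO_pow_pow (𝕜 := ℝ) (by lia : 1 < n + 2))
    simpa [hasDerivAt_iff_isLittleO] using ho
  · have heq : (fun t : ℝ => max t 0 ^ (n + 2)) =ᶠ[𝓝 t] fun t => t ^ (n + 2) := by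
      filter_upwards [lt_mem_nhds ht] with s hs
      simp [max_eq_left hs.le]
    rw [max_eq_left ht.le]
    simpa using (hasDerivAt_pow (n + 2) t).congr_of_eventuallyEq heq

lemma hasDerivAt_max_one_sub_div_pow (n : ℕ) (T s : ℝ) :
    HasDerivAt (fun s : ℝ => max (1 - s / T) 0 ^ (n + 2))
      (-((n + 2) / T * max (1 - s / T) 0 ^ (n + 1))) s := by
  have h : HasDerivAt (fun s : ℝ => 1 - s / T) (-(1 / T)) s :=
    ((hasDerivAt_id s).div_const T).const_sub 1
  refine ((hasDerivAt_max_zero_pow n (1 - s / T)).comp s h).congr_deriv ?_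
  ring

/-- A convex decreasing `C²` cutoff on the half line, equal to `1` at `0` and vanishing beyond `T`,
whose derivatives tend to zero as `T → ∞`. -/
noncomputable def cutoff (T s : ℝ) : ℝ := max (1 - s / T) 0 ^ 3

variable {T s : ℝ}

lemma hasDerivAt_cutoff (T s : ℝ) :
    HasDerivAt (cutoff T) (-(3 / T * max (1 - s / T) 0 ^ 2)) s :=
  (hasDerivAt_max_one_sub_div_pow 1 T s).congr_deriv (by norm_num)

lemma deriv_cutoff (T : ℝ) : deriv (cutoff T) = fun s => -(3 / T * max (1 - s / T) 0 ^ 2) :=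
  funext fun s => (hasDerivAt_cutoff T s).deriv

lemma hasDerivAt_deriv_cutoff (T s : ℝ) :
    HasDerivAt (deriv (cutoff T)) (6 / T ^ 2 * max (1 - s / T) 0) s := by
  rw [deriv_cutoff]
  exact ((hasDerivAt_max_one_sub_div_pow 0 T s).const_mul (3 / T)).fun_neg.congr_deriv
    (by norm_num; ring)

lemma deriv_deriv_cutoff (T : ℝ) :
    deriv (deriv (cutoff T)) = fun s => 6 / T ^ 2 * max (1 - s / T) 0 :=
  funext fun s => (hasDerivAt_deriv_cutoff T s).deriv

lemma contDiff_two_of_deriv {g : ℝ → ℝ} (h₁ : Differentiable ℝ g) (h₂ : Differentiable ℝ (deriv g))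
    (h₃ : Continuous (deriv (deriv g))) : ContDiff ℝ 2 g := by
  rw [← one_add_one_eq_two, contDiff_succ_iff_deriv]
  refine ⟨h₁, by simp, ?_⟩
  rw [← zero_add 1, contDiff_succ_iff_deriv]
  exact ⟨h₂, by simp, contDiff_zero.2 h₃⟩

lemma contDiff_cutoff (T : ℝ) : ContDiff ℝ 2 (cutoff T) := by
  refine contDiff_two_of_deriv (fun s => (hasDerivAt_cutoff T s).differentiableAt)
    (fun s => (hasDerivAt_deriv_cutoff T s).differentiableAt) ?_
  rw [deriv_deriv_cutoff]
  fun_prop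

lemma cutoff_eq_zero (hT : 0 < T) (hs : T ≤ s) : cutoff T s = 0 := by
  have : 1 ≤ s / T := (one_le_div hT).2 hs
  simp [cutoff, max_eq_right (show 1 - s / T ≤ 0 by linarith)]

lemma cutoff_nonneg (T s : ℝ) : 0 ≤ cutoff T s := by
  unfold cutoff
  positivity

lemma max_one_sub_div_le_one (hT : 0 ≤ T) (hs : 0 ≤ s) : max (1 - s / T) 0 ≤ 1 := by
  have : 0 ≤ s / T := by positivity
  simp [this]

lemma cutoff_le_one (hT : 0 ≤ T) (hs : 0 ≤ s) : cutoff T s ≤ 1 :=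
  pow_le_one₀ (by positivity) (max_one_sub_div_le_one hT hs)

lemma deriv_cutoff_nonpos (hT : 0 ≤ T) : deriv (cutoff T) s ≤ 0 := by
  rw [deriv_cutoff, neg_nonpos]
  positivity

lemma neg_deriv_cutoff_le (hT : 0 ≤ T) (hs : 0 ≤ s) : -deriv (cutoff T) s ≤ 3 / T := by
  rw [deriv_cutoff, neg_neg]
  exact mul_le_of_le_one_right (by positivity)
    (pow_le_one₀ (by positivity) (max_one_sub_div_le_one hT hs))

lemma deriv_deriv_cutoff_nonneg (T s : ℝ) : 0 ≤ deriv (deriv (cutoff T)) s := by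
  rw [deriv_deriv_cutoff]
  positivity

lemma deriv_deriv_cutoff_le (hT : 0 ≤ T) (hs : 0 ≤ s) :
    deriv (deriv (cutoff T)) s ≤ 6 / T ^ 2 := by
  rw [deriv_deriv_cutoff]
  exact mul_le_of_le_one_right (by positivity) (max_one_sub_div_le_one hT hs)

lemma tendsto_cutoff (s : ℝ) : Tendsto (fun T => cutoff T s) atTop (𝓝 1) := by
  have h : Tendsto (fun T : ℝ => max (1 - s / T) 0 ^ 3) atTop (𝓝 (max (1 - 0) 0 ^ 3)) :=
    ((tendsto_const_nhds.sub (tendsto_const_nhds.div_atTop tendsto_id)).max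
      tendsto_const_nhds).pow 3
  simpa [cutoff] using h

/-- The cutoff multiplied by `1 + e⁻ˢ`. The extra factor makes it strictly convex, with second
derivative at least `e⁻ˢ` wherever the cutoff is `1`. -/
noncomputable def expCutoff (T s : ℝ) : ℝ := cutoff T s * (1 + Real.exp (-s))

lemma hasDerivAt_exp_neg (s : ℝ) : HasDerivAt (fun s => Real.exp (-s)) (-Real.exp (-s)) s := by
  simpa using (hasDerivAt_neg s).exp

lemma hasDerivAt_expCutoff (T s : ℝ) : HasDerivAt (expCutoff T)
    (deriv (cutoff T) s * (1 + Real.exp (-s)) + cutoff T s * -Real.exp (-s)) s :=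
  (hasDerivAt_cutoff T s).differentiableAt.hasDerivAt.mul ((hasDerivAt_exp_neg s).const_add 1)

lemma deriv_deriv_expCutoff (T s : ℝ) : deriv (deriv (expCutoff T)) s =
    deriv (deriv (cutoff T)) s * (1 + Real.exp (-s)) - 2 * deriv (cutoff T) s * Real.exp (-s)
      + cutoff T s * Real.exp (-s) := by
  rw [funext fun s => (hasDerivAt_expCutoff T s).deriv]
  have h₀ := (hasDerivAt_cutoff T s).differentiableAt.hasDerivAt
  have h₁ := (hasDerivAt_deriv_cutoff T s).differentiableAt.hasDerivAt
  refine ((h₁.mul ((hasDerivAt_exp_neg s).const_add 1)).add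
    (h₀.mul (hasDerivAt_exp_neg s).fun_neg)).deriv.trans ?_
  ring

lemma contDiff_expCutoff (T : ℝ) : ContDiff ℝ 2 (expCutoff T) :=
  (contDiff_cutoff T).mul (contDiff_const.add (Real.contDiff_exp.comp contDiff_neg))

lemma expCutoff_nonneg (T s : ℝ) : 0 ≤ expCutoff T s :=
  mul_nonneg (cutoff_nonneg T s) (by positivity)

lemma cutoff_le_expCutoff (T s : ℝ) : cutoff T s ≤ expCutoff T s :=
  le_mul_of_one_le_right (cutoff_nonneg T s) (by simp [Real.exp_nonneg])

lemma exp_neg_le_one (hs : 0 ≤ s) : Real.exp (-s) ≤ 1 := Real.exp_le_one_iff.2 (by linarith)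

lemma expCutoff_le_two (hT : 0 ≤ T) (hs : 0 ≤ s) : expCutoff T s ≤ 2 :=
  (mul_le_of_le_one_left (by positivity) (cutoff_le_one hT hs)).trans
    (by linarith [exp_neg_le_one hs])

lemma abs_deriv_expCutoff_le (hT : 1 ≤ T) (hs : 0 ≤ s) : |deriv (expCutoff T) s| ≤ 7 := by
  have hT0 : 0 ≤ T := zero_le_one.trans hT
  have hc := cutoff_le_one hT0 hs
  have hc0 := cutoff_nonneg T s
  have hd := (neg_deriv_cutoff_le hT0 hs).trans (div_le_self (by norm_num) hT)
  have hd0 := deriv_cutoff_nonpos (s := s) hT0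
  have he := Real.exp_pos (-s)
  have he1 := exp_neg_le_one hs
  rw [(hasDerivAt_expCutoff T s).deriv, abs_le]
  constructor <;> nlinarith

lemma cutoff_mul_exp_neg_le_deriv_deriv_expCutoff (hT : 0 ≤ T) :
    cutoff T s * Real.exp (-s) ≤ deriv (deriv (expCutoff T)) s := by
  have hsnd := deriv_deriv_cutoff_nonneg T s
  have hfst := deriv_cutoff_nonpos (s := s) hT
  have he := Real.exp_pos (-s)
  rw [deriv_deriv_expCutoff]
  nlinarith [mul_nonneg hsnd he.le, mul_nonneg (neg_nonneg.2 hfst) he.le]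

end Cutoff

section LogPotential

variable {E : Type*} [NormedAddCommGroup E]

/-- The logarithmic potential `-log |x|` regularised at scale `δ`; at `δ = 0` it is `-log |x|`,
with value `0` at the origin. -/
noncomputable def logPot (δ : ℝ) (x : E) : ℝ := -(1 / 2) * Real.log (‖x‖ ^ 2 + δ ^ 2)

variable {δ : ℝ} {x : E}

lemma logPot_zero_left (x : E) : logPot 0 x = -Real.log ‖x‖ := by
  simp [logPot, Real.log_pow]

lemma norm_sq_add_sq_pos (hx : x ≠ 0) : 0 < ‖x‖ ^ 2 + δ ^ 2 := by
  have := norm_pos_iff.2 hx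
  positivity

lemma logPot_nonneg (h : ‖x‖ ^ 2 + δ ^ 2 ≤ 1) : 0 ≤ logPot δ x := by
  have := Real.log_nonpos (by positivity) h
  unfold logPot
  linarith

lemma logPot_zero_nonneg (hx : ‖x‖ ≤ 1) : 0 ≤ logPot 0 x :=
  logPot_nonneg (by simpa using hx)

lemma exp_neg_logPot_zero (hx : x ≠ 0) : Real.exp (-logPot 0 x) = ‖x‖ := by
  rw [logPot_zero_left, neg_neg, Real.exp_log (norm_pos_iff.2 hx)]

lemma le_logPot_zero_iff (hx : x ≠ 0) {t : ℝ} : t ≤ logPot 0 x ↔ ‖x‖ ≤ Real.exp (-t) := by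
  rw [logPot_zero_left, le_neg, Real.log_le_iff_le_exp (norm_pos_iff.2 hx)]

variable [InnerProductSpace ℝ E]

lemma contDiffAt_logPot (h : 0 < ‖x‖ ^ 2 + δ ^ 2) {n : WithTop ℕ∞} :
    ContDiffAt ℝ n (logPot δ) x :=
  contDiffAt_const.mul (((contDiff_norm_sq ℝ).contDiffAt.add contDiffAt_const).log h.ne')

lemma fderiv_logPot (h : 0 < ‖x‖ ^ 2 + δ ^ 2) :
    fderiv ℝ (logPot δ) x = -((‖x‖ ^ 2 + δ ^ 2)⁻¹ • innerSL ℝ x) := by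
  refine ((((hasStrictFDerivAt_norm_sq x).hasFDerivAt.add_const (δ ^ 2)).log h.ne').const_mul
    (-(1 / 2))).fderiv.trans ?_
  ext v
  simp
  ring

lemma norm_fderiv_logPot (h : 0 < ‖x‖ ^ 2 + δ ^ 2) :
    ‖fderiv ℝ (logPot δ) x‖ = ‖x‖ / (‖x‖ ^ 2 + δ ^ 2) := by
  rw [fderiv_logPot h, norm_neg, norm_smul, innerSL_apply_norm, norm_inv, Real.norm_of_nonneg h.le]
  field_simp

lemma norm_fderiv_logPot_le (hx : x ≠ 0) : ‖fderiv ℝ (logPot δ) x‖ ≤ ‖x‖⁻¹ := by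
  have := norm_pos_iff.2 hx
  rw [norm_fderiv_logPot (norm_sq_add_sq_pos hx), inv_eq_one_div,
    div_le_div_iff₀ (by positivity) this]
  nlinarith [sq_nonneg δ]

variable [FiniteDimensional ℝ E]

lemma norm_gradient_logPot_zero (hx : x ≠ 0) : ‖∇ (logPot 0) x‖ = ‖x‖⁻¹ := by
  have := norm_pos_iff.2 hx
  rw [norm_gradient, norm_fderiv_logPot (norm_sq_add_sq_pos hx)]
  field_simp
  simp

variable [hdim : Fact (finrank ℝ E = 2)]

lemma laplacian_logPot (h : 0 < ‖x‖ ^ 2 + δ ^ 2) :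
    Δ (logPot (E := E) δ) x = -(2 * δ ^ 2 / (‖x‖ ^ 2 + δ ^ 2) ^ 2) := by
  let g (t : ℝ) : ℝ := -(1 / 2) * Real.log (t + δ ^ 2)
  have hg₁ : deriv g = fun t => -(1 / 2) * (t + δ ^ 2)⁻¹ := by
    funext t
    simp [g, deriv_comp_add_const (f := Real.log)]
  have hg₂ : deriv (deriv g) (‖x‖ ^ 2) = 1 / 2 * ((‖x‖ ^ 2 + δ ^ 2) ^ 2)⁻¹ := by
    simp [hg₁, deriv_comp_add_const (f := Inv.inv)]
  have hg : ContDiffAt ℝ 2 g (‖x‖ ^ 2) :=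
    contDiffAt_const.mul ((contDiffAt_id.add contDiffAt_const).log h.ne')
  refine (laplacian_comp (u := fun y : E => ‖y‖ ^ 2) hg (contDiff_norm_sq ℝ).contDiffAt).trans ?_
  rw [hg₂, hg₁, gradient_norm_sq, laplacian_norm_sq, hdim.out, norm_smul]
  field_simp
  norm_num
  ring

lemma laplacian_mul_comp_logPot {φ : E → ℝ} {g : ℝ → ℝ} (hφ : ContDiffAt ℝ 2 φ x)
    (hg : ContDiffAt ℝ 2 g (logPot 0 x)) (hx : x ≠ 0) :
    Δ (fun y => φ y * g (logPot 0 y)) x =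
      φ x * (deriv (deriv g) (logPot 0 x) / ‖x‖ ^ 2) + g (logPot 0 x) * Δ φ x +
        2 * (deriv g (logPot 0 x) * ⟪∇ φ x, ∇ (logPot 0) x⟫_ℝ) := by
  have hpos := norm_sq_add_sq_pos (δ := 0) hx
  have hℓ : ContDiffAt ℝ 2 (logPot 0) x := contDiffAt_logPot hpos
  have hgℓ : ContDiffAt ℝ 2 (fun y => g (logPot 0 y)) x := hg.comp x hℓ
  rw [laplacian_mul hφ hgℓ, laplacian_comp hg hℓ, laplacian_logPot hpos,
    norm_gradient_logPot_zero hx, gradient_comp (hg.differentiableAt two_ne_zero)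
    (hℓ.differentiableAt two_ne_zero), inner_smul_right]
  ring

end LogPotential

section PuncturedBall

variable {E : Type*} [NormedAddCommGroup E] {R r : ℝ}

/-- The ball of radius `R` centred at the origin, without the origin. -/
def puncturedBall (E : Type*) [NormedAddCommGroup E] (R : ℝ) : Set E := {z | 0 < ‖z‖ ∧ ‖z‖ < R}

lemma puncturedBall_mono (h : r ≤ R) : puncturedBall E r ⊆ puncturedBall E R :=
  fun _ hz => ⟨hz.1, hz.2.trans_le h⟩

lemma isOpen_puncturedBall : IsOpen (puncturedBall E R) :=
  (isOpen_lt continuous_const continuous_norm).inter (isOpen_lt continuous_norm continuous_const)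

lemma diff_ball_subset_puncturedBall {K : Set E} (hr : 0 < r) (hK : K ⊆ ball 0 R) :
    K \ ball 0 r ⊆ puncturedBall E R := fun x hx =>
  ⟨hr.trans_le (by simpa using hx.2), by simpa using hK hx.1⟩

end PuncturedBall

lemma integrable_of_tendsto_of_integral_norm_le {α F : Type*} {m : MeasurableSpace α}
    {μ : Measure α} [NormedAddCommGroup F] {f : ℕ → α → F} {g : α → F} {C : ℝ}
    (hf : ∀ n, Integrable (f n) μ) (hlim : ∀ᵐ x ∂μ, Tendsto (fun n => f n x) atTop (𝓝 (g x)))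
    (hC : ∀ n, ∫ x, ‖f n x‖ ∂μ ≤ C) : Integrable g μ := by
  refine memLp_one_iff_integrable.1
    ⟨aestronglyMeasurable_of_tendsto_ae _ (fun n => (hf n).1) hlim, ?_⟩
  refine (Lp.eLpNorm_lim_le_liminf_eLpNorm (fun n => (hf n).1) g hlim).trans_lt ?_
  refine (liminf_le_of_frequently_le' (.of_forall fun n => ?_)).trans_lt
    (ENNReal.ofReal_lt_top (r := C))
  rw [eLpNorm_one_eq_lintegral_enorm, ← ofReal_integral_norm_eq_lintegral_enorm (hf n)]
  exact ENNReal.ofReal_le_ofReal (hC n)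

section Superharmonic

variable {E : Type*} [NormedAddCommGroup E] {v φ χ : E → ℝ} {g : ℝ → ℝ} {R r T : ℝ} {x : E}

lemma eqOn_mul_comp_logPot_zero (hg : ∀ s, T ≤ s → g s = 0) :
    EqOn (fun x => φ x * g (logPot 0 x)) 0
      (puncturedBall E R \ (tsupport φ \ ball 0 (Real.exp (-T)))) := fun x hx => by
  by_cases hφ : x ∈ tsupport φ
  · have hxT : ‖x‖ < Real.exp (-T) := by simpa [hφ] using hx.2
    simp [hg _ ((le_logPot_zero_iff (norm_pos_iff.1 hx.1.1)).2 hxT.le)]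
  · simp [image_eq_zero_of_notMem_tsupport hφ]

lemma isCompact_tsupport_of_subset_ball [ProperSpace E] (hs : tsupport φ ⊆ ball 0 R) :
    IsCompact (tsupport φ) :=
  isCompact_of_isClosed_isBounded (isClosed_tsupport φ) (isBounded_ball.subset hs)

variable [InnerProductSpace ℝ E]

lemma contDiffOn_mul_comp_logPot {n : WithTop ℕ∞} (hφ : ContDiff ℝ n φ) (hg : ContDiff ℝ n g) :
    ContDiffOn ℝ n (fun x => φ x * g (logPot 0 x)) (puncturedBall E R) := fun x hx =>
  (hφ.contDiffAt.mul (hg.contDiffAt.comp x (contDiffAt_logPot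
    (norm_sq_add_sq_pos (norm_pos_iff.1 hx.1))))).contDiffWithinAt

variable [FiniteDimensional ℝ E]

/-- `v` is nonnegative, of class `C²` and superharmonic on `U`. -/
structure NonnegSuperharmonicOn (v : E → ℝ) (U : Set E) : Prop where
  contDiffOn : ContDiffOn ℝ 2 v U
  nonneg : ∀ x ∈ U, 0 ≤ v x
  neg_laplacian_nonneg : ∀ x ∈ U, 0 ≤ -Δ v x

lemma NonnegSuperharmonicOn.mono {U V : Set E} (h : NonnegSuperharmonicOn v U) (hVU : V ⊆ U) :
    NonnegSuperharmonicOn v V :=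
  ⟨h.1.mono hVU, fun x hx => h.2 x (hVU hx), fun x hx => h.3 x (hVU hx)⟩

lemma NonnegSuperharmonicOn.div_norm_sub_laplacian_nonneg
    (h : NonnegSuperharmonicOn v (puncturedBall E R)) {x : E} (hx : x ∈ puncturedBall E R) :
    0 ≤ v x / ‖x‖ - Δ v x := by
  have := div_nonneg (h.2 x hx) (norm_nonneg x)
  linarith [h.3 x hx]

lemma mul_inner_gradient_logPot_le (φ : E → ℝ) (t : ℝ) (hx : x ≠ 0) :
    |2 * (t * ⟪∇ φ x, ∇ (logPot 0) x⟫_ℝ)| ≤ 2 * |t| * (‖fderiv ℝ φ x‖ / ‖x‖) := by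
  have := abs_real_inner_le_norm (∇ φ x) (∇ (logPot 0) x)
  rw [norm_gradient_logPot_zero hx, norm_gradient, ← div_eq_mul_inv] at this
  rw [abs_mul, abs_mul, abs_two, ← mul_assoc]
  gcongr

/-- Convexity of `expCutoff` gives `Δ (expCutoff T ∘ log |x|⁻¹) ≥ cutoff T / |x|`; the terms
involving derivatives of `χ` are an error. -/
lemma mul_cutoff_mul_le [Fact (finrank ℝ E = 2)] (hχ : ContDiff ℝ 2 χ) (hχ0 : 0 ≤ χ x)
    (hv : 0 ≤ v x) (hf : 0 ≤ -Δ v x) (hT : 1 ≤ T) (hx0 : x ≠ 0) (hx1 : ‖x‖ ≤ 1) :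
    χ x * cutoff T (logPot 0 x) * (v x / ‖x‖ - Δ v x) ≤
      v x * Δ (fun y => χ y * expCutoff T (logPot 0 y)) x -
        χ x * expCutoff T (logPot 0 x) * Δ v x +
        v x * (2 * |Δ χ x| + 14 * (‖fderiv ℝ χ x‖ / ‖x‖)) := by
  have hT0 : 0 ≤ T := zero_le_one.trans hT
  have hx : 0 < ‖x‖ := norm_pos_iff.2 hx0
  have hℓ : 0 ≤ logPot 0 x := logPot_zero_nonneg hx1
  have hconvex : cutoff T (logPot 0 x) / ‖x‖ ≤
      deriv (deriv (expCutoff T)) (logPot 0 x) / ‖x‖ ^ 2 := by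
    have := cutoff_mul_exp_neg_le_deriv_deriv_expCutoff (s := logPot 0 x) hT0
    rw [exp_neg_logPot_zero hx0] at this
    rw [div_le_div_iff₀ hx (by positivity)]
    nlinarith
  have hlap : -(2 * |Δ χ x|) ≤ expCutoff T (logPot 0 x) * Δ χ x := by
    refine (abs_le.1 ?_).1
    rw [abs_mul, abs_of_nonneg (expCutoff_nonneg _ _)]
    gcongr
    exact expCutoff_le_two hT0 hℓ
  have hgrad : -(14 * (‖fderiv ℝ χ x‖ / ‖x‖)) ≤
      2 * (deriv (expCutoff T) (logPot 0 x) * ⟪∇ χ x, ∇ (logPot 0) x⟫_ℝ) := by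
    refine (abs_le.1 ((mul_inner_gradient_logPot_le _ _ hx0).trans ?_)).1
    gcongr
    linarith [abs_deriv_expCutoff_le hT hℓ]
  rw [laplacian_mul_comp_logPot hχ.contDiffAt (contDiff_expCutoff T).contDiffAt hx0]
  have h₁ := mul_le_mul_of_nonneg_left hconvex (mul_nonneg hv hχ0)
  have h₂ := mul_le_mul_of_nonneg_left (cutoff_le_expCutoff T (logPot 0 x)) (mul_nonneg hχ0 hf)
  have h₃ := mul_le_mul_of_nonneg_left (add_le_add hlap hgrad) hv
  rw [show χ x * cutoff T (logPot 0 x) * (v x / ‖x‖ - Δ v x) =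
    v x * χ x * (cutoff T (logPot 0 x) / ‖x‖) + χ x * -Δ v x * cutoff T (logPot 0 x) by ring]
  linarith

variable [MeasurableSpace E] [BorelSpace E]

lemma setIntegral_mul_laplacian_mul_comp_logPot (hv : ContDiffOn ℝ 2 v (puncturedBall E R))
    (hφ : ContDiff ℝ 2 φ) (hs : tsupport φ ⊆ ball 0 R)
    (hg : ContDiff ℝ 2 g) (hg0 : ∀ s, T ≤ s → g s = 0) :
    let ψ := fun x => φ x * g (logPot 0 x)
    IntegrableOn (fun x => v x * Δ ψ x) (puncturedBall E R) ∧
      IntegrableOn (fun x => ψ x * Δ v x) (puncturedBall E R) ∧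
      ∫ x in puncturedBall E R, v x * Δ ψ x = ∫ x in puncturedBall E R, ψ x * Δ v x :=
  setIntegral_mul_laplacian_comm isOpen_puncturedBall (contDiffOn_mul_comp_logPot hφ hg) hv
    ((isCompact_tsupport_of_subset_ball hs).diff isOpen_ball)
    (diff_ball_subset_puncturedBall (Real.exp_pos (-T)) hs)
    (eqOn_mul_comp_logPot_zero hg0)

lemma integrableOn_mul_comp_logPot {w : E → ℝ} (hw : ContinuousOn w (puncturedBall E R))
    (hφ : Continuous φ) (hs : tsupport φ ⊆ ball 0 R)
    (hg : Continuous g) (hg0 : ∀ s, T ≤ s → g s = 0) :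
    IntegrableOn (fun x => φ x * g (logPot 0 x) * w x) (puncturedBall E R) :=
  integrableOn_of_eqOn_zero isOpen_puncturedBall
    ((contDiffOn_mul_comp_logPot (contDiff_zero.2 hφ) (contDiff_zero.2 hg)).continuousOn.mul hw)
    ((isCompact_tsupport_of_subset_ball hs).diff isOpen_ball)
    (diff_ball_subset_puncturedBall (Real.exp_pos (-T)) hs)
    fun x hx => by simp [eqOn_mul_comp_logPot_zero (T := T) hg0 hx]

end Superharmonic

section Integrability

variable {E : Type*} [NormedAddCommGroup E] [InnerProductSpace ℝ E] [FiniteDimensional ℝ E]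
  [MeasurableSpace E] [BorelSpace E] {v χ : E → ℝ} {R r T : ℝ}

lemma tendsto_natCast_add_one : Tendsto (fun n : ℕ => (n : ℝ) + 1) atTop atTop :=
  tendsto_atTop_add_const_right _ _ tendsto_natCast_atTop_atTop

lemma integrableOn_mul_cutoff_error (hv : ContinuousOn v (puncturedBall E R))
    (χ : ContDiffBump (0 : E)) (hχR : χ.rOut < R) :
    IntegrableOn (fun x => v x * (2 * |Δ ⇑χ x| + 14 * (‖fderiv ℝ χ x‖ / ‖x‖)))
      (puncturedBall E R) := by
  have hχ : ContDiff ℝ 2 χ := χ.contDiff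
  have hχ' : Continuous (fderiv ℝ χ) := hχ.continuous_fderiv two_ne_zero
  have hK : closedBall (0 : E) χ.rOut \ ball 0 χ.rIn ⊆ puncturedBall E R :=
    diff_ball_subset_puncturedBall χ.rIn_pos (closedBall_subset_ball hχR)
  refine integrableOn_of_eqOn_zero isOpen_puncturedBall (hv.mul ?_)
    ((isCompact_closedBall 0 χ.rOut).diff isOpen_ball) hK fun x hx => ?_
  · exact (((continuous_laplacian hχ).abs.const_mul 2).continuousOn).add (continuousOn_const.mul
      (hχ'.norm.continuousOn.div continuousOn_id.norm fun x hx => hx.1.ne'))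
  · have hlocal : ∃ c : ℝ, χ =ᶠ[𝓝 x] fun _ => c := by
      rcases lt_or_ge ‖x‖ χ.rIn with h | h
      · exact ⟨1, χ.eventuallyEq_one_of_mem_ball (by simpa using h)⟩
      · refine ⟨0, notMem_tsupport_iff_eventuallyEq.1 ?_⟩
        rw [χ.tsupport_eq]
        intro hx'
        exact hx.2 ⟨hx', by simpa using h⟩
    obtain ⟨c, hc⟩ := hlocal
    simp [(laplacian_congr_nhds hc).eq_of_nhds, hc.fderiv_eq]

variable [Fact (finrank ℝ E = 2)]

lemma NonnegSuperharmonicOn.setIntegral_mul_cutoff_le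
    (h : NonnegSuperharmonicOn v (puncturedBall E R)) (hR : R ≤ 1) (χ : ContDiffBump (0 : E))
    (hχR : χ.rOut < R) (hT : 1 ≤ T) :
    IntegrableOn (fun x => χ x * cutoff T (logPot 0 x) * (v x / ‖x‖ - Δ v x))
        (puncturedBall E R) ∧
      ∫ x in puncturedBall E R, χ x * cutoff T (logPot 0 x) * (v x / ‖x‖ - Δ v x) ≤
        ∫ x in puncturedBall E R, v x * (2 * |Δ ⇑χ x| + 14 * (‖fderiv ℝ χ x‖ / ‖x‖)) := by
  have hT0 : 0 < T := by linarith
  have hs : tsupport χ ⊆ ball 0 R := χ.tsupport_eq ▸ closedBall_subset_ball hχR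
  have hcut : ∀ s, T ≤ s → cutoff T s = 0 := fun s => cutoff_eq_zero hT0
  have hint : IntegrableOn (fun x => χ x * cutoff T (logPot 0 x) * (v x / ‖x‖ - Δ v x))
      (puncturedBall E R) :=
    integrableOn_mul_comp_logPot ((h.1.continuousOn.div continuousOn_id.norm
      fun x hx => hx.1.ne').sub (continuousOn_laplacian isOpen_puncturedBall h.1)) χ.continuous hs
      (contDiff_cutoff T).continuous hcut
  obtain ⟨h₁, h₂, heq⟩ := setIntegral_mul_laplacian_mul_comp_logPot (T := T) h.1 χ.contDiff hs
    (contDiff_expCutoff T) fun s hs => by simp [expCutoff, hcut s hs]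
  have herr := integrableOn_mul_cutoff_error h.1.continuousOn χ hχR
  refine ⟨hint, ?_⟩
  calc _ ≤ _ := setIntegral_mono_on hint ((h₁.sub h₂).add herr)
        isOpen_puncturedBall.measurableSet fun x hx => mul_cutoff_mul_le χ.contDiff χ.nonneg
          (h.2 x hx) (h.3 x hx) hT (norm_pos_iff.1 hx.1) (hx.2.le.trans hR)
    _ = _ := by
      rw [integral_add' (h₁.sub h₂) herr, integral_sub' h₁ h₂, heq, sub_self, zero_add]

lemma NonnegSuperharmonicOn.integrableOn_div_norm_sub_laplacian
    (h : NonnegSuperharmonicOn v (puncturedBall E R)) (hR : R ≤ 1) (hr : r < R) :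
    IntegrableOn (fun x => v x / ‖x‖ - Δ v x) (puncturedBall E r) := by
  rcases le_or_gt r 0 with hr0 | hr0
  · simp [show puncturedBall E r = ∅ from
      eq_empty_of_forall_notMem fun _ hx => (hx.1.trans hx.2).not_ge hr0]
  obtain ⟨r', hrr', hr'R⟩ := exists_between hr
  let χ : ContDiffBump (0 : E) := ⟨r, r', hr0, hrr'⟩
  have hbound (n : ℕ) := h.setIntegral_mul_cutoff_le (T := n + 1) hR χ hr'R (by simp)
  have hint : IntegrableOn (fun x => χ x * (v x / ‖x‖ - Δ v x)) (puncturedBall E R) := by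
    refine integrable_of_tendsto_of_integral_norm_le
      (C := ∫ x in puncturedBall E R, v x * (2 * |Δ ⇑χ x| + 14 * (‖fderiv ℝ χ x‖ / ‖x‖)))
      (fun n => (hbound n).1) (.of_forall fun x => ?_) fun n => ?_
    · simpa using (((tendsto_cutoff (logPot 0 x)).comp tendsto_natCast_add_one).const_mul
        (χ x)).mul_const (v x / ‖x‖ - Δ v x)
    · refine (setIntegral_congr_fun isOpen_puncturedBall.measurableSet fun x hx => ?_).trans_le
        (hbound n).2
      exact Real.norm_of_nonneg (mul_nonneg (mul_nonneg χ.nonneg (cutoff_nonneg _ _))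
        (h.div_norm_sub_laplacian_nonneg hx))
  refine (hint.mono_set (puncturedBall_mono hr.le)).congr_fun (fun x hx => ?_)
    isOpen_puncturedBall.measurableSet
  simp [χ.one_of_mem_closedBall (show x ∈ closedBall 0 r by simpa using hx.2.le)]

lemma NonnegSuperharmonicOn.integrableOn_div_norm
    (h : NonnegSuperharmonicOn v (puncturedBall E R)) (hR : R ≤ 1) (hr : r < R) :
    IntegrableOn (fun x => v x / ‖x‖) (puncturedBall E r) := by
  refine (h.integrableOn_div_norm_sub_laplacian hR hr).mono' (ContinuousOn.aestronglyMeasurable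
    ?_ isOpen_puncturedBall.measurableSet)
    (ae_restrict_of_forall_mem isOpen_puncturedBall.measurableSet fun x hx => ?_)
  · exact (h.1.continuousOn.mono (puncturedBall_mono hr.le)).div continuousOn_id.norm
      fun x hx => hx.1.ne'
  · rw [Real.norm_of_nonneg (div_nonneg (h.2 x (puncturedBall_mono hr.le hx)) (norm_nonneg x))]
    linarith [h.3 x (puncturedBall_mono hr.le hx)]

lemma NonnegSuperharmonicOn.integrableOn_laplacian
    (h : NonnegSuperharmonicOn v (puncturedBall E R)) (hR : R ≤ 1) (hr : r < R) :
    IntegrableOn (Δ v) (puncturedBall E r) := by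
  refine ((h.integrableOn_div_norm_sub_laplacian hR hr).sub
    (h.integrableOn_div_norm hR hr)).neg.congr_fun (fun x _ => ?_)
    isOpen_puncturedBall.measurableSet
  simp

end Integrability

section PointMass

variable {E : Type*} [NormedAddCommGroup E] [InnerProductSpace ℝ E] [FiniteDimensional ℝ E]
  {φ : E → ℝ}

lemma hasCompactSupport_laplacian (hc : HasCompactSupport φ) : HasCompactSupport (Δ φ) :=
  hc.mono' fun x hx => by
    by_contra hφ
    have heq : φ =ᶠ[𝓝 x] fun _ => 0 := notMem_tsupport_iff_eventuallyEq.1 hφ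
    exact hx ((laplacian_congr_nhds heq).eq_of_nhds.trans (by simp))

lemma exists_bound_of_apply_zero (hφ : ContDiff ℝ 2 φ) (hc : HasCompactSupport φ) (h0 : φ 0 = 0) :
    ∃ C, ∀ x, |φ x| ≤ C * ‖x‖ ∧ ‖fderiv ℝ φ x‖ ≤ C ∧ |Δ φ x| ≤ C := by
  obtain ⟨C₁, hC₁⟩ := (hφ.continuous_fderiv two_ne_zero).bounded_above_of_compact_support
    (hc.fderiv ℝ)
  obtain ⟨C₂, hC₂⟩ := (continuous_laplacian hφ).bounded_above_of_compact_support
    (hasCompactSupport_laplacian hc)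
  refine ⟨max C₁ C₂, fun x => ⟨?_, (hC₁ x).trans (le_max_left _ _),
    (hC₂ x).trans (le_max_right _ _)⟩⟩
  simpa [h0] using convex_univ.norm_image_sub_le_of_norm_fderiv_le (𝕜 := ℝ)
    (fun y _ => hφ.differentiable two_ne_zero y)
    (fun y _ => (hC₁ y).trans (le_max_left C₁ C₂)) (mem_univ 0) (mem_univ x)

lemma integrableOn_mul_of_integrableOn_div_norm [MeasurableSpace E] [BorelSpace E] {v w : E → ℝ}
    {R : ℝ} (hint : IntegrableOn (fun x => v x / ‖x‖) (puncturedBall E R)) (hw : Continuous w)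
    (hc : HasCompactSupport w) : IntegrableOn (fun x => v x * w x) (puncturedBall E R) := by
  have hw' : Continuous fun x => w x * ‖x‖ := hw.mul continuous_norm
  obtain ⟨C, hC⟩ := hw'.bounded_above_of_compact_support hc.mul_right
  have h : IntegrableOn (fun x => w x * ‖x‖ * (v x / ‖x‖)) (puncturedBall E R) :=
    hint.bdd_mul hw'.aestronglyMeasurable (.of_forall hC)
  refine h.congr_fun (fun x hx => ?_) isOpen_puncturedBall.measurableSet
  have := hx.1.ne'
  field_simp

variable [Fact (finrank ℝ E = 2)] {C T : ℝ} {x : E}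

lemma abs_laplacian_mul_cutoff_le (hφ : ContDiff ℝ 2 φ) (h₀ : |φ x| ≤ C * ‖x‖)
    (h₁ : ‖fderiv ℝ φ x‖ ≤ C) (h₂ : |Δ φ x| ≤ C) (hT : 1 ≤ T) (hx : x ≠ 0) (hx1 : ‖x‖ ≤ 1) :
    |Δ (fun y => φ y * cutoff T (logPot 0 y)) x| ≤ 13 * C / ‖x‖ := by
  have hT0 : 0 ≤ T := zero_le_one.trans hT
  have hn : 0 < ‖x‖ := norm_pos_iff.2 hx
  have hC : 0 ≤ C := (norm_nonneg _).trans h₁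
  have hℓ : 0 ≤ logPot 0 x := logPot_zero_nonneg hx1
  have hradial : |φ x * (deriv (deriv (cutoff T)) (logPot 0 x) / ‖x‖ ^ 2)| ≤ 6 * C / ‖x‖ := by
    have h6 : deriv (deriv (cutoff T)) (logPot 0 x) ≤ 6 := (deriv_deriv_cutoff_le hT0 hℓ).trans
      (div_le_self (by norm_num) (one_le_pow₀ hT))
    have h0 := div_nonneg (deriv_deriv_cutoff_nonneg T (logPot 0 x)) (sq_nonneg ‖x‖)
    rw [abs_mul, abs_of_nonneg h0]
    calc _ ≤ C * ‖x‖ * (6 / ‖x‖ ^ 2) := by gcongr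
      _ = _ := by field_simp
  have hlap : |cutoff T (logPot 0 x) * Δ φ x| ≤ C / ‖x‖ := by
    rw [abs_mul, abs_of_nonneg (cutoff_nonneg _ _)]
    calc _ ≤ 1 * C := by
          gcongr
          exact cutoff_le_one hT0 hℓ
      _ ≤ _ := by rw [one_mul]; exact le_div_self hC hn hx1
  have hgrad : |2 * (deriv (cutoff T) (logPot 0 x) * ⟪∇ φ x, ∇ (logPot 0) x⟫_ℝ)| ≤
      6 * C / ‖x‖ := by
    have h3 : |deriv (cutoff T) (logPot 0 x)| ≤ 3 := by
      rw [abs_of_nonpos (deriv_cutoff_nonpos hT0)]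
      exact (neg_deriv_cutoff_le hT0 hℓ).trans (div_le_self (by norm_num) hT)
    calc _ ≤ 2 * 3 * (C / ‖x‖) := (mul_inner_gradient_logPot_le _ _ hx).trans (by gcongr)
      _ = _ := by ring
  rw [laplacian_mul_comp_logPot hφ.contDiffAt (contDiff_cutoff T).contDiffAt hx]
  refine (abs_add_three _ _ _).trans ((add_le_add_three hradial hlap hgrad).trans_eq ?_)
  ring

lemma tendsto_laplacian_mul_cutoff (hφ : ContDiff ℝ 2 φ) (hx : x ≠ 0) (hx1 : ‖x‖ ≤ 1) :
    Tendsto (fun T => Δ (fun y => φ y * cutoff T (logPot 0 y)) x) atTop (𝓝 (Δ φ x)) := by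
  have hℓ : 0 ≤ logPot 0 x := logPot_zero_nonneg hx1
  have h₁ : Tendsto (fun T => deriv (cutoff T) (logPot 0 x)) atTop (𝓝 0) := by
    have : Tendsto (fun T : ℝ => -(3 / T)) atTop (𝓝 0) := by
      simpa using (tendsto_const_nhds.div_atTop (tendsto_id (α := ℝ))).neg (f := fun T => 3 / T)
    refine tendsto_of_tendsto_of_tendsto_of_le_of_le' this tendsto_const_nhds ?_ ?_
    · filter_upwards [eventually_ge_atTop 0] with T hT
      linarith [neg_deriv_cutoff_le hT hℓ]
    · filter_upwards [eventually_ge_atTop 0] with T hT using deriv_cutoff_nonpos hT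
  have h₂ : Tendsto (fun T => deriv (deriv (cutoff T)) (logPot 0 x)) atTop (𝓝 0) :=
    squeeze_zero' (.of_forall fun T => deriv_deriv_cutoff_nonneg T _)
      ((eventually_ge_atTop 0).mono fun T hT => deriv_deriv_cutoff_le hT hℓ)
      (tendsto_const_nhds.div_atTop (tendsto_pow_atTop two_ne_zero))
  simp_rw [laplacian_mul_comp_logPot hφ.contDiffAt (contDiff_cutoff _).contDiffAt hx]
  simpa using (((h₂.div_const (‖x‖ ^ 2)).const_mul (φ x)).add
    ((tendsto_cutoff (logPot 0 x)).mul_const (Δ φ x))).add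
    ((h₁.mul_const ⟪∇ φ x, ∇ (logPot 0) x⟫_ℝ).const_mul 2)

variable [MeasurableSpace E] [BorelSpace E] {v ψ : E → ℝ} {R : ℝ}

lemma setIntegral_mul_laplacian_of_apply_zero (hR : R ≤ 1)
    (hv : ContDiffOn ℝ 2 v (puncturedBall E R))
    (hint : IntegrableOn (fun x => v x / ‖x‖) (puncturedBall E R))
    (hΔ : IntegrableOn (Δ v) (puncturedBall E R)) (hφ : ContDiff ℝ 2 φ)
    (hs : tsupport φ ⊆ ball 0 R) (h0 : φ 0 = 0) :
    ∫ x in puncturedBall E R, v x * Δ φ x = ∫ x in puncturedBall E R, φ x * Δ v x := by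
  obtain ⟨C, hC⟩ := exists_bound_of_apply_zero hφ (isCompact_tsupport_of_subset_ball hs) h0
  have hgreen (n : ℕ) := setIntegral_mul_laplacian_mul_comp_logPot (T := n + 1) hv hφ hs
    (contDiff_cutoff (n + 1)) fun s => cutoff_eq_zero (by positivity)
  have hU := (isOpen_puncturedBall (E := E) (R := R)).measurableSet
  have hbound (n : ℕ) (x : E) (hx : x ∈ puncturedBall E R) :
      ‖v x * Δ (fun y => φ y * cutoff (n + 1) (logPot 0 y)) x‖ ≤ 13 * C * ‖v x / ‖x‖‖ := by
    obtain ⟨h₀, h₁, h₂⟩ := hC x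
    have h := abs_laplacian_mul_cutoff_le (T := n + 1) hφ h₀ h₁ h₂ (by simp) (norm_pos_iff.1 hx.1)
      (hx.2.le.trans hR)
    simp only [norm_mul, norm_div, norm_norm]
    calc _ ≤ ‖v x‖ * (13 * C / ‖x‖) := by gcongr; exact h
      _ = _ := by ring
  have hbound' (n : ℕ) (x : E) (hx : x ∈ puncturedBall E R) :
      ‖φ x * cutoff (n + 1) (logPot 0 x) * Δ v x‖ ≤ C * ‖Δ v x‖ := by
    have hx1 : ‖x‖ ≤ 1 := hx.2.le.trans hR
    have hcut : cutoff (n + 1) (logPot 0 x) ≤ 1 :=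
      cutoff_le_one (by positivity) (logPot_zero_nonneg hx1)
    have hφx : ‖φ x‖ ≤ C :=
      (hC x).1.trans (mul_le_of_le_one_right ((norm_nonneg _).trans (hC x).2.1) hx1)
    rw [norm_mul, norm_mul, Real.norm_of_nonneg (cutoff_nonneg _ _)]
    gcongr
    exact (mul_le_of_le_one_right (norm_nonneg _) hcut).trans hφx
  have hleft := tendsto_integral_of_dominated_convergence (fun x => 13 * C * ‖v x / ‖x‖‖)
    (fun n => (hgreen n).1.aestronglyMeasurable) (hint.norm.const_mul _)
    (fun n => ae_restrict_of_forall_mem hU (hbound n))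
    (ae_restrict_of_forall_mem hU fun x hx => ((tendsto_laplacian_mul_cutoff hφ
      (norm_pos_iff.1 hx.1) (hx.2.le.trans hR)).comp tendsto_natCast_add_one).const_mul (v x))
  have hright := tendsto_integral_of_dominated_convergence (fun x => C * ‖Δ v x‖)
    (fun n => (hgreen n).2.1.aestronglyMeasurable) (hΔ.norm.const_mul _)
    (fun n => ae_restrict_of_forall_mem hU (hbound' n))
    (.of_forall fun x => (((tendsto_cutoff (logPot 0 x)).comp
      tendsto_natCast_add_one).const_mul (φ x)).mul_const (Δ v x))
  simp only [mul_one] at hright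
  exact tendsto_nhds_unique hleft (hright.congr fun n => (hgreen n).2.2.symm)

lemma setIntegral_mul_laplacian_sub_eq (hR : R ≤ 1) (hv : ContDiffOn ℝ 2 v (puncturedBall E R))
    (hint : IntegrableOn (fun x => v x / ‖x‖) (puncturedBall E R))
    (hΔ : IntegrableOn (Δ v) (puncturedBall E R)) (hφ : ContDiff ℝ 2 φ)
    (hs : tsupport φ ⊆ ball 0 R) (hψ : ContDiff ℝ 2 ψ) (hs' : tsupport ψ ⊆ ball 0 R)
    (h0 : φ 0 = ψ 0) :
    (∫ x in puncturedBall E R, v x * Δ φ x) - ∫ x in puncturedBall E R, φ x * Δ v x =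
      (∫ x in puncturedBall E R, v x * Δ ψ x) - ∫ x in puncturedBall E R, ψ x * Δ v x := by
  have hintΔ {φ : E → ℝ} (hφ : ContDiff ℝ 2 φ) (hs : tsupport φ ⊆ ball 0 R) :
      IntegrableOn (fun x => v x * Δ φ x) (puncturedBall E R) :=
    integrableOn_mul_of_integrableOn_div_norm hint (continuous_laplacian hφ)
      (hasCompactSupport_laplacian (isCompact_tsupport_of_subset_ball hs))
  have hintφ {φ : E → ℝ} (hφ : ContDiff ℝ 2 φ) (hs : tsupport φ ⊆ ball 0 R) :
      IntegrableOn (fun x => φ x * Δ v x) (puncturedBall E R) :=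
    have ⟨C, hC⟩ := hφ.continuous.bounded_above_of_compact_support
      (isCompact_tsupport_of_subset_ball hs)
    hΔ.bdd_mul hφ.continuous.aestronglyMeasurable (.of_forall hC)
  have key := setIntegral_mul_laplacian_of_apply_zero (φ := φ - ψ) hR hv hint hΔ (hφ.sub hψ)
    ((tsupport_sub _ _).trans (union_subset hs hs')) (by simp [h0])
  simp only [hφ.contDiffAt.laplacian_sub hψ.contDiffAt, Pi.sub_apply, mul_sub, sub_mul] at key
  rw [integral_sub (hintΔ hφ hs) (hintΔ hψ hs'), integral_sub (hintφ hφ hs) (hintφ hψ hs')] at key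
  linarith

lemma exists_setIntegral_mul_neg_laplacian (hR0 : 0 < R) (hR : R ≤ 1)
    (hv : ContDiffOn ℝ 2 v (puncturedBall E R))
    (hint : IntegrableOn (fun x => v x / ‖x‖) (puncturedBall E R))
    (hΔ : IntegrableOn (Δ v) (puncturedBall E R)) :
    ∃ M : ℝ, ∀ φ : E → ℝ, ContDiff ℝ 2 φ → tsupport φ ⊆ ball 0 R →
      ∫ x in puncturedBall E R, v x * -Δ φ x =
        (∫ x in puncturedBall E R, φ x * -Δ v x) + M * φ 0 := by
  let χ : ContDiffBump (0 : E) := ⟨R / 3, R / 2, by linarith, by linarith⟩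
  have hχ : ContDiff ℝ 2 χ := χ.contDiff
  have hχs : tsupport χ ⊆ ball 0 R := χ.tsupport_eq ▸ closedBall_subset_ball (half_lt_self hR0)
  have hχ0 : χ (0 : E) = 1 := χ.one_of_mem_closedBall (mem_closedBall_self χ.rIn_pos.le)
  refine ⟨(∫ x in puncturedBall E R, χ x * Δ v x) - ∫ x in puncturedBall E R, v x * Δ ⇑χ x,
    fun φ hφ hs => ?_⟩
  have hs' : tsupport (φ 0 • ⇑χ) ⊆ ball 0 R :=
    (closure_mono (Function.support_const_smul_subset _ _)).trans hχs
  have key := setIntegral_mul_laplacian_sub_eq hR hv hint hΔ hφ hs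
    (ψ := φ 0 • ⇑χ) (contDiff_const.smul hχ) hs' (by simp [hχ0])
  simp only [laplacian_smul _ hχ.contDiffAt, Pi.smul_apply, smul_eq_mul, mul_assoc,
    mul_left_comm (v _), integral_const_mul] at key
  simp only [mul_neg, integral_neg]
  linarith

end PointMass

section TruncatedPotential

variable {E : Type*} [NormedAddCommGroup E]

lemma logPot_le_zero_left (δ : ℝ) {x : E} (hx : x ≠ 0) : logPot δ x ≤ logPot 0 x :=
  mul_le_mul_of_nonpos_left (Real.log_le_log (norm_sq_add_sq_pos hx)
    (by simpa using sq_nonneg δ)) (by norm_num)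

lemma logPot_le_neg_log {δ r : ℝ} {x : E} (hr : 0 < r) (hx : r ≤ ‖x‖) :
    logPot δ x ≤ -Real.log r := by
  refine (logPot_le_zero_left δ (norm_pos_iff.1 (hr.trans_le hx))).trans ?_
  rw [logPot_zero_left]
  gcongr

lemma tendsto_logPot {x : E} (hx : x ≠ 0) :
    Tendsto (fun δ => logPot δ x) (𝓝 0) (𝓝 (logPot 0 x)) := by
  have : ContinuousAt (fun δ : ℝ => ‖x‖ ^ 2 + δ ^ 2) 0 := by fun_prop
  exact (this.log (norm_sq_add_sq_pos hx).ne').const_mul _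

variable [InnerProductSpace ℝ E]

lemma abs_fderiv_apply_self_div_le {f : E → ℝ} {x : E} {δ C r : ℝ} (hC : ‖fderiv ℝ f x‖ ≤ C)
    (hr : 0 < r) (hx : r ≤ ‖x‖) : |fderiv ℝ f x x / (‖x‖ ^ 2 + δ ^ 2)| ≤ C / r := by
  have hx0 : 0 < ‖x‖ := hr.trans_le hx
  have hC0 : 0 ≤ C := (norm_nonneg _).trans hC
  rw [abs_div, abs_of_pos (by positivity : 0 < ‖x‖ ^ 2 + δ ^ 2)]
  calc _ ≤ C * ‖x‖ / ‖x‖ ^ 2 := by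
        gcongr
        · exact (fderiv ℝ f x).le_of_opNorm_le hC x
        · exact le_add_of_nonneg_right (sq_nonneg δ)
    _ = C / ‖x‖ := by field_simp
    _ ≤ _ := by gcongr

variable [FiniteDimensional ℝ E]

/-- The logarithmic potential `logPot δ`, truncated by a bump function. -/
noncomputable def bumpPot (χ : ContDiffBump (0 : E)) (δ : ℝ) (x : E) : ℝ := χ x * logPot δ x

/-- The terms of the Laplacian of `bumpPot χ δ` that involve derivatives of `χ`. -/
noncomputable def bumpErr (χ : ContDiffBump (0 : E)) (δ : ℝ) (x : E) : ℝ :=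
  logPot δ x * Δ ⇑χ x - 2 * (fderiv ℝ χ x x / (‖x‖ ^ 2 + δ ^ 2))

variable {χ : ContDiffBump (0 : E)} {δ : ℝ} {x : E}

lemma bumpPot_sub_comm (χ : ContDiffBump (0 : E)) (δ : ℝ) (x y : E) :
    bumpPot χ δ (x - y) = bumpPot χ δ (y - x) := by
  rw [bumpPot, bumpPot, ← neg_sub y x, χ.neg, logPot, logPot, norm_neg]

lemma bumpPot_eq_zero (hx : χ.rOut ≤ ‖x‖) : bumpPot χ δ x = 0 := by
  simp [bumpPot, χ.zero_of_le_dist (x := x) (by simpa using hx)]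

lemma bumpPot_eq_logPot (hx : ‖x‖ ≤ χ.rIn) : bumpPot χ δ x = logPot δ x := by
  simp [bumpPot, χ.one_of_mem_closedBall (x := x) (by simpa using hx)]

lemma bumpPot_nonneg (h : χ.rOut ^ 2 + δ ^ 2 ≤ 1) (x : E) : 0 ≤ bumpPot χ δ x := by
  rcases le_or_gt χ.rOut ‖x‖ with hx | hx
  · rw [bumpPot_eq_zero hx]
  · exact mul_nonneg χ.nonneg (logPot_nonneg (h.trans' (by gcongr)))

lemma bumpPot_zero_nonneg (hχ : χ.rOut ≤ 1) (x : E) : 0 ≤ bumpPot χ 0 x :=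
  bumpPot_nonneg (by simpa [abs_of_pos χ.rOut_pos] using hχ) x

lemma bumpPot_le_zero_left (χ : ContDiffBump (0 : E)) (δ : ℝ) (hx : x ≠ 0) :
    bumpPot χ δ x ≤ bumpPot χ 0 x :=
  mul_le_mul_of_nonneg_left (logPot_le_zero_left δ hx) χ.nonneg

lemma contDiffAt_bumpPot (h : 0 < ‖x‖ ^ 2 + δ ^ 2) {n : ℕ∞} : ContDiffAt ℝ n (bumpPot χ δ) x :=
  χ.contDiffAt.mul (contDiffAt_logPot h)

lemma hasCompactSupport_bumpPot (χ : ContDiffBump (0 : E)) (δ : ℝ) :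
    HasCompactSupport (bumpPot χ δ) :=
  χ.hasCompactSupport.mul_right

lemma bumpErr_eq_zero_of_eventuallyEq {c : ℝ} (h : χ =ᶠ[𝓝 x] fun _ => c) : bumpErr χ δ x = 0 := by
  simp [bumpErr, (laplacian_congr_nhds h).eq_of_nhds, h.fderiv_eq]

lemma bumpErr_eq_zero_of_lt (hx : ‖x‖ < χ.rIn) : bumpErr χ δ x = 0 :=
  bumpErr_eq_zero_of_eventuallyEq (χ.eventuallyEq_one_of_mem_ball (by simpa using hx))

lemma hasCompactSupport_bumpErr (χ : ContDiffBump (0 : E)) (δ : ℝ) :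
    HasCompactSupport (bumpErr χ δ) :=
  χ.hasCompactSupport.mono' fun x hx => by
    by_contra h
    exact hx (bumpErr_eq_zero_of_eventuallyEq (notMem_tsupport_iff_eventuallyEq.1 h))

lemma contDiff_bumpErr (χ : ContDiffBump (0 : E)) (δ : ℝ) {n : ℕ} : ContDiff ℝ n (bumpErr χ δ) := by
  refine contDiff_iff_contDiffAt.2 fun x => ?_
  rcases eq_or_ne x 0 with rfl | hx
  · refine contDiffAt_const (c := (0 : ℝ)) |>.congr_of_eventuallyEq ?_
    filter_upwards [ball_mem_nhds (0 : E) χ.rIn_pos] with y hy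
    exact bumpErr_eq_zero_of_lt (by simpa using hy)
  · have h := norm_sq_add_sq_pos (δ := δ) hx
    have hΔ : ContDiffAt ℝ n (Δ ⇑χ) x :=
      contDiffAt_laplacian (χ.contDiffAt (n := (n + 2 : ℕ))) le_rfl
    have hd : ContDiffAt ℝ n (fderiv ℝ χ) x :=
      (χ.contDiffAt (n := (n + 1 : ℕ))).fderiv_right le_rfl
    exact ((contDiffAt_logPot h).mul hΔ).sub (contDiffAt_const.mul ((hd.clm_apply contDiffAt_id).div
      ((contDiff_norm_sq ℝ).contDiffAt.add contDiffAt_const) h.ne'))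

lemma tendsto_bumpErr (χ : ContDiffBump (0 : E)) (hx : x ≠ 0) :
    Tendsto (fun δ => bumpErr χ δ x) (𝓝 0) (𝓝 (bumpErr χ 0 x)) := by
  have : ContinuousAt (fun δ : ℝ => ‖x‖ ^ 2 + δ ^ 2) 0 := by fun_prop
  exact ((tendsto_logPot hx).mul_const _).sub
    ((tendsto_const_nhds.div this (norm_sq_add_sq_pos hx).ne').const_mul 2)

lemma bumpErr_eq_zero_of_notMem (hx : x ∉ closedBall 0 χ.rOut \ ball 0 χ.rIn) :
    bumpErr χ δ x = 0 := by
  rcases lt_or_ge ‖x‖ χ.rIn with h | h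
  · exact bumpErr_eq_zero_of_lt h
  · refine bumpErr_eq_zero_of_eventuallyEq (notMem_tsupport_iff_eventuallyEq.1 fun hx' => hx ?_)
    exact ⟨χ.tsupport_eq ▸ hx', by simpa using h⟩

lemma exists_abs_bumpErr_le (χ : ContDiffBump (0 : E)) :
    ∃ B, ∀ δ, χ.rOut ^ 2 + δ ^ 2 ≤ 1 → ∀ x, |bumpErr χ δ x| ≤ B := by
  have hχ : ContDiff ℝ 2 χ := χ.contDiff
  obtain ⟨C₁, hC₁⟩ := (hχ.continuous_fderiv two_ne_zero).bounded_above_of_compact_support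
    (χ.hasCompactSupport.fderiv ℝ)
  obtain ⟨C₂, hC₂⟩ := (continuous_laplacian hχ).bounded_above_of_compact_support
    (hasCompactSupport_laplacian χ.hasCompactSupport)
  have hC₁0 : 0 ≤ C₁ := (norm_nonneg _).trans (hC₁ 0)
  have hC₂0 : 0 ≤ C₂ := (norm_nonneg _).trans (hC₂ 0)
  have hr := χ.rIn_pos
  refine ⟨-Real.log χ.rIn * C₂ + 2 * (C₁ / χ.rIn), fun δ hδ x => ?_⟩
  have hlog : 0 ≤ -Real.log χ.rIn := neg_nonneg.2 (Real.log_nonpos hr.le (by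
    nlinarith [χ.rIn_lt_rOut, sq_nonneg δ]))
  by_cases hx : x ∈ closedBall 0 χ.rOut \ ball 0 χ.rIn
  · obtain ⟨hxOut, hxIn⟩ : ‖x‖ ≤ χ.rOut ∧ χ.rIn ≤ ‖x‖ := by simpa using hx
    have hpot : |logPot δ x| ≤ -Real.log χ.rIn := by
      rw [abs_of_nonneg (logPot_nonneg (hδ.trans' (by gcongr)))]
      exact logPot_le_neg_log hr hxIn
    refine (abs_sub _ _).trans (add_le_add ?_ ?_)
    · rw [abs_mul]
      exact mul_le_mul hpot (hC₂ x) (abs_nonneg _) hlog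
    · rw [abs_mul, abs_two]
      gcongr
      exact abs_fderiv_apply_self_div_le (hC₁ x) hr hxIn
  · rw [bumpErr_eq_zero_of_notMem hx, abs_zero]
    positivity

lemma laplacian_bumpPot [Fact (finrank ℝ E = 2)] (χ : ContDiffBump (0 : E))
    (h : 0 < ‖x‖ ^ 2 + δ ^ 2) :
    Δ (bumpPot χ δ) x = bumpErr χ δ x - 2 * δ ^ 2 / (‖x‖ ^ 2 + δ ^ 2) ^ 2 * χ x := by
  have hgrad : ⟪∇ ⇑χ x, ∇ (logPot δ) x⟫_ℝ = -(fderiv ℝ χ x x / (‖x‖ ^ 2 + δ ^ 2)) := by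
    rw [inner_gradient_right, fderiv_logPot h]
    simp
    field_simp
  unfold bumpPot bumpErr
  rw [laplacian_mul χ.contDiffAt (contDiffAt_logPot h), laplacian_logPot h, hgrad]
  ring

end TruncatedPotential

section ApproximateIdentity

variable {E : Type*} [NormedAddCommGroup E]

lemma tendsto_norm_sq_mul_div_one_add_norm_sq_sq (c : ℝ) :
    Tendsto (fun x : E => ‖x‖ ^ 2 * (c / (1 + ‖x‖ ^ 2) ^ 2)) (Bornology.cobounded E) (𝓝 0) := by
  have h : Tendsto (fun x : E => |c| / (1 + ‖x‖ ^ 2)) (Bornology.cobounded E) (𝓝 0) :=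
    tendsto_const_nhds.div_atTop (tendsto_atTop_add_const_left _ _
      ((tendsto_pow_atTop two_ne_zero).comp tendsto_norm_cobounded_atTop))
  refine squeeze_zero_norm (fun x => ?_) h
  have h1 : ‖x‖ ^ 2 / (1 + ‖x‖ ^ 2) ≤ 1 := div_le_one_of_le₀ (by linarith) (by positivity)
  calc ‖‖x‖ ^ 2 * (c / (1 + ‖x‖ ^ 2) ^ 2)‖ = |c| / (1 + ‖x‖ ^ 2) * (‖x‖ ^ 2 / (1 + ‖x‖ ^ 2)) := by
        rw [Real.norm_eq_abs, abs_mul, abs_div, abs_of_nonneg (by positivity : 0 ≤ ‖x‖ ^ 2),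
          abs_of_nonneg (by positivity : 0 ≤ (1 + ‖x‖ ^ 2) ^ 2)]
        field_simp
    _ ≤ _ := mul_le_of_le_one_right (by positivity) h1

variable [InnerProductSpace ℝ E] [FiniteDimensional ℝ E] [MeasurableSpace E] [BorelSpace E]

/-- The total mass of `-Δ (logPot 1)`, which is `2π` in dimension two. -/
noncomputable def potMass (E : Type*) [NormedAddCommGroup E] [InnerProductSpace ℝ E]
    [FiniteDimensional ℝ E] [MeasurableSpace E] [BorelSpace E] : ℝ :=
  ∫ x : E, 2 / (1 + ‖x‖ ^ 2) ^ 2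

variable [Fact (finrank ℝ E = 2)]

lemma integrable_two_div_one_add_norm_sq_sq : Integrable fun x : E => 2 / (1 + ‖x‖ ^ 2) ^ 2 := by
  have h := (integrable_rpow_neg_one_add_norm_sq (E := E) (μ := volume) (r := 4)
    (by rw [Fact.out (p := finrank ℝ E = 2)]; norm_num)).const_mul 2
  refine h.congr (.of_forall fun x => ?_)
  have h0 : (0 : ℝ) ≤ 1 + ‖x‖ ^ 2 := by positivity
  have h2 : (-4 / 2 : ℝ) = -((2 : ℕ) : ℝ) := by norm_num
  simp only [h2, Real.rpow_neg h0, Real.rpow_natCast]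
  rfl

lemma potMass_pos : 0 < potMass E := by
  have hpos (x : E) : 0 < 2 / (1 + ‖x‖ ^ 2) ^ 2 := by positivity
  refine (integral_pos_iff_support_of_nonneg (fun x => (hpos x).le)
    integrable_two_div_one_add_norm_sq_sq).2 ?_
  rw [Function.support_eq_univ fun x => (hpos x).ne']
  exact Measure.measure_univ_pos.2 (NeZero.ne _)

lemma tendsto_integral_laplacian_logPot_mul {g : E → ℝ} {z : E} (hg : Integrable g)
    (hz : ContinuousAt g z) :
    Tendsto (fun δ => ∫ y, 2 * δ ^ 2 / (‖y - z‖ ^ 2 + δ ^ 2) ^ 2 * g y) (𝓝[>] 0)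
      (𝓝 (potMass E * g z)) := by
  have hκ := potMass_pos (E := E)
  have h := tendsto_integral_comp_smul_smul_of_integrable' (μ := (volume : Measure E))
    (φ := fun x => (potMass E)⁻¹ * 2 / (1 + ‖x‖ ^ 2) ^ 2) (fun x => by positivity)
    (by simp_rw [mul_div_assoc, integral_const_mul]; exact inv_mul_cancel₀ hκ.ne')
    (by simpa only [Fact.out (p := finrank ℝ E = 2)] using
      tendsto_norm_sq_mul_div_one_add_norm_sq_sq _) hg hz
  refine ((h.comp tendsto_inv_nhdsGT_zero).const_mul (potMass E)).congr' ?_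
  filter_upwards [self_mem_nhdsWithin] with δ (hδ : 0 < δ)
  simp only [Function.comp, Fact.out (p := finrank ℝ E = 2), smul_eq_mul, norm_smul]
  rw [← integral_const_mul]
  congr 1
  funext y
  rw [norm_inv, Real.norm_of_nonneg hδ.le, norm_sub_rev z y]
  field_simp
  ring

end ApproximateIdentity

lemma nontrivial_of_fact_finrank_eq_two {E : Type*} [AddCommGroup E] [Module ℝ E]
    [Fact (finrank ℝ E = 2)] : Nontrivial E :=
  nontrivial_of_finrank_eq_succ (Fact.out (p := finrank ℝ E = 2))

lemma integral_indicator_mul {α : Type*} [MeasurableSpace α] {μ : Measure α} {U : Set α}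
    (hU : MeasurableSet U) (f g : α → ℝ) :
    ∫ x, U.indicator f x * g x ∂μ = ∫ x in U, f x * g x ∂μ := by
  rw [← integral_indicator hU]
  simp_rw [indicator_mul_left]

lemma exists_ball_abs_le_of_continuousAt {E : Type*} [PseudoMetricSpace E] {F : E → ℝ} {z : E}
    (hFz : ContinuousAt F z) :
    ∃ s, 0 < s ∧ s ≤ 1 ∧ ∀ y ∈ ball z s, |F y| ≤ |F z| + 1 := by
  obtain ⟨s, hs, hball⟩ := Metric.eventually_nhds_iff_ball.1
    (hFz.abs.eventually (gt_mem_nhds (lt_add_one |F z|)))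
  exact ⟨min s 1, by positivity, min_le_right _ _, fun y hy =>
    (hball y (ball_subset_ball (min_le_left _ _) hy)).le⟩

section Representation

variable {E : Type*} [NormedAddCommGroup E] [InnerProductSpace ℝ E] [FiniteDimensional ℝ E]
  {χ : ContDiffBump (0 : E)} {s t Λ R δ : ℝ} {x z : E}

lemma bumpPot_zero_le_inv_norm (hχ : χ.rOut ≤ 1) (hx : x ≠ 0) : bumpPot χ 0 x ≤ ‖x‖⁻¹ := by
  have hx0 := norm_pos_iff.2 hx
  rcases le_or_gt χ.rOut ‖x‖ with h | h
  · rw [bumpPot_eq_zero h]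
    positivity
  · refine (mul_le_of_le_one_left (logPot_zero_nonneg (h.le.trans hχ)) χ.le_one).trans ?_
    rw [logPot_zero_left, ← Real.log_inv]
    linarith [Real.log_le_sub_one_of_pos (inv_pos.2 hx0)]

lemma bumpPot_zero_le_neg_log (hχ : χ.rOut ≤ 1) (hs0 : 0 < s) (hs1 : s ≤ 1) (hx : s ≤ ‖x‖) :
    bumpPot χ 0 x ≤ -Real.log s := by
  rcases le_or_gt χ.rOut ‖x‖ with h | h
  · rw [bumpPot_eq_zero h]
    exact neg_nonneg.2 (Real.log_nonpos hs0.le hs1)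
  · refine (mul_le_of_le_one_left (logPot_zero_nonneg (h.le.trans hχ)) χ.le_one).trans ?_
    rw [logPot_zero_left]
    gcongr

lemma abs_mul_bumpPot_zero_le (hχ : χ.rOut ≤ 1) (hs0 : 0 < s) (hs1 : s ≤ 1) (hx : x ≠ 0)
    (ht : x ∈ ball 0 s → |t| ≤ Λ) :
    |t * bumpPot χ 0 x| ≤ Λ * (ball 0 s).indicator (fun x => ‖x‖⁻¹) x + -Real.log s * |t| := by
  have hlog : 0 ≤ -Real.log s := neg_nonneg.2 (Real.log_nonpos hs0.le hs1)
  have hpot := bumpPot_zero_nonneg hχ x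
  rw [abs_mul, abs_of_nonneg hpot]
  by_cases hxs : x ∈ ball 0 s
  · rw [indicator_of_mem hxs]
    have h := mul_le_mul (ht hxs) (bumpPot_zero_le_inv_norm hχ hx) hpot
      ((abs_nonneg t).trans (ht hxs))
    exact h.trans (le_add_of_nonneg_right (by positivity))
  · rw [indicator_of_notMem hxs, mul_zero, zero_add, mul_comm]
    gcongr
    exact bumpPot_zero_le_neg_log hχ hs0 hs1 (by simpa using hxs)

lemma tsupport_bumpPot_sub_subset (hR : χ.rIn + χ.rOut ≤ R) (hz : ‖z‖ < χ.rIn) :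
    tsupport (fun y => bumpPot χ δ (y - z)) ⊆ ball 0 R := by
  have hsub : tsupport (fun y => bumpPot χ δ (y - z)) ⊆ closedBall z χ.rOut :=
    closure_minimal (fun y hy => by
      by_contra h
      rw [mem_closedBall, dist_eq_norm, not_le] at h
      exact hy (bumpPot_eq_zero h.le)) isClosed_closedBall
  refine hsub.trans (closedBall_subset_ball' ?_)
  rw [dist_zero_right]
  linarith

variable [MeasurableSpace E] [BorelSpace E] {F v : E → ℝ}

lemma measurable_bumpPot (χ : ContDiffBump (0 : E)) (δ : ℝ) : Measurable (bumpPot χ δ) := by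
  have := χ.continuous.measurable
  unfold bumpPot logPot
  fun_prop

lemma integrableOn_ball_norm_rpow [Nontrivial E] {p : ℝ} (hp : -(finrank ℝ E : ℝ) < p) (s : ℝ) :
    IntegrableOn (fun x : E => ‖x‖ ^ p) (ball 0 s) := by
  rcases le_or_gt s 0 with hs | hs
  · simp [ball_eq_empty.2 hs]
  refine (integrableOn_fun_norm_addHaar volume (f := fun t : ℝ => t ^ p)).2 ?_
  refine ((intervalIntegral.integrableOn_Ioo_rpow_iff (s := finrank ℝ E - 1 + p) hs).2
    (by linarith)).congr_fun (fun t ht => ?_) measurableSet_Ioo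
  simp only [smul_eq_mul, Real.rpow_add ht.1, ← Nat.cast_pred finrank_pos, Real.rpow_natCast]

lemma contDiff_integral_mul_bumpErr (χ : ContDiffBump (0 : E)) (hF : Integrable F) :
    ContDiff ℝ 1 fun z => ∫ y, F y * bumpErr χ 0 (y - z) := by
  have hg : HasCompactSupport fun x => bumpErr χ 0 (-x) :=
    (hasCompactSupport_bumpErr χ 0).comp_homeomorph (Homeomorph.neg E)
  have heq : (fun z => ∫ y, F y * bumpErr χ 0 (y - z)) =
      convolution F (fun x => bumpErr χ 0 (-x)) (ContinuousLinearMap.mul ℝ ℝ) volume := by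
    funext z
    simp [convolution_def]
  rw [heq]
  exact hg.contDiff_convolution_right (n := 1) (ContinuousLinearMap.mul ℝ ℝ)
    hF.locallyIntegrable ((contDiff_bumpErr χ 0 (n := 1)).comp contDiff_neg)

lemma integrableOn_of_integrableOn_div_norm
    (hint : IntegrableOn (fun x => v x / ‖x‖) (puncturedBall E R)) :
    IntegrableOn v (puncturedBall E R) := by
  have hU := (isOpen_puncturedBall (E := E) (R := R)).measurableSet
  refine IntegrableOn.congr_fun (f := fun x => ‖x‖ * (v x / ‖x‖))
    (hint.bdd_mul (c := R) continuous_norm.aestronglyMeasurable ?_)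
    (fun x hx => mul_div_cancel₀ _ hx.1.ne') hU
  exact ae_restrict_of_forall_mem hU fun x hx => by simpa using hx.2.le

variable [Fact (finrank ℝ E = 2)] {M : ℝ}

attribute [local instance] nontrivial_of_fact_finrank_eq_two

lemma integrableOn_ball_inv_norm (s : ℝ) : IntegrableOn (fun x : E => ‖x‖⁻¹) (ball 0 s) := by
  simpa only [Real.rpow_neg_one] using integrableOn_ball_norm_rpow (E := E) (p := -1)
    (by rw [Fact.out (p := finrank ℝ E = 2)]; norm_num) s

lemma integrable_mul_bumpPot_zero (hχ : χ.rOut ≤ 1) (hF : Integrable F) (hs0 : 0 < s)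
    (hs1 : s ≤ 1) (hΛ : ∀ y ∈ ball z s, |F y| ≤ Λ) :
    Integrable fun y => F y * bumpPot χ 0 (y - z) := by
  have hint : Integrable ((ball (0 : E) s).indicator fun x => ‖x‖⁻¹) :=
    (integrable_indicator_iff measurableSet_ball).2 (integrableOn_ball_inv_norm _)
  refine (((hint.comp_sub_right z).const_mul Λ).add (hF.norm.const_mul (-Real.log s))).mono'
    (hF.aestronglyMeasurable.mul
      ((measurable_bumpPot χ 0).comp (measurable_id.sub_const z)).aestronglyMeasurable) ?_
  filter_upwards [volume.ae_ne z] with y hy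
  exact abs_mul_bumpPot_zero_le hχ hs0 hs1 (sub_ne_zero.2 hy) fun h =>
    hΛ y (by simpa [dist_eq_norm] using h)

lemma eventually_sq_add_sq_le_one {a : ℝ} (ha0 : 0 ≤ a) (ha : a < 1) :
    ∀ᶠ δ : ℝ in 𝓝 0, a ^ 2 + δ ^ 2 ≤ 1 := by
  have h : Tendsto (fun δ : ℝ => a ^ 2 + δ ^ 2) (𝓝 0) (𝓝 (a ^ 2)) :=
    Continuous.tendsto' (by fun_prop) _ _ (by simp)
  exact (h.eventually_lt_const (pow_lt_one₀ ha0 ha two_ne_zero)).mono fun _ => le_of_lt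

lemma tendsto_integral_mul_bumpErr (hχ : χ.rOut < 1) (hF : Integrable F) (z : E) :
    Tendsto (fun δ => ∫ y, F y * bumpErr χ δ (y - z)) (𝓝[>] 0)
      (𝓝 (∫ y, F y * bumpErr χ 0 (y - z))) := by
  obtain ⟨B, hB⟩ := exists_abs_bumpErr_le χ
  refine tendsto_integral_filter_of_dominated_convergence (fun y => ‖F y‖ * B)
    (.of_forall fun δ => hF.aestronglyMeasurable.mul ((contDiff_bumpErr χ δ
      (n := 0)).continuous.comp (continuous_sub_right z)).aestronglyMeasurable) ?_
    (hF.norm.mul_const B) ?_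
  · filter_upwards [nhdsWithin_le_nhds (eventually_sq_add_sq_le_one χ.rOut_pos.le hχ)] with δ hδ
    refine .of_forall fun y => ?_
    rw [norm_mul]
    gcongr
    exact hB δ hδ _
  · filter_upwards [volume.ae_ne z] with y hy
    exact ((tendsto_bumpErr χ (sub_ne_zero.2 hy)).mono_left nhdsWithin_le_nhds).const_mul _

lemma tendsto_integral_mul_bumpPot (hχ : χ.rOut < 1) (hF : Integrable F) (hFz : ContinuousAt F z) :
    Tendsto (fun δ => ∫ y, F y * bumpPot χ δ (y - z)) (𝓝[>] 0)
      (𝓝 (∫ y, F y * bumpPot χ 0 (y - z))) := by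
  obtain ⟨s, hs0, hs1, hs⟩ := exists_ball_abs_le_of_continuousAt hFz
  refine tendsto_integral_filter_of_dominated_convergence (fun y => ‖F y * bumpPot χ 0 (y - z)‖)
    (.of_forall fun δ => hF.aestronglyMeasurable.mul
      ((measurable_bumpPot χ δ).comp (measurable_id.sub_const z)).aestronglyMeasurable) ?_
    (integrable_mul_bumpPot_zero hχ.le hF hs0 hs1 hs).norm ?_
  · filter_upwards [nhdsWithin_le_nhds (eventually_sq_add_sq_le_one χ.rOut_pos.le hχ)] with δ hδ
    filter_upwards [volume.ae_ne z] with y hy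
    rw [norm_mul, norm_mul, Real.norm_of_nonneg (bumpPot_nonneg hδ _),
      Real.norm_of_nonneg (bumpPot_zero_nonneg hχ.le _)]
    gcongr
    exact bumpPot_le_zero_left χ δ (sub_ne_zero.2 hy)
  · filter_upwards [volume.ae_ne z] with y hy
    exact (((tendsto_logPot (sub_ne_zero.2 hy)).const_mul _).const_mul _).mono_left
      nhdsWithin_le_nhds

lemma tendsto_integral_approx_mul (χ : ContDiffBump (0 : E)) (hF : Integrable F)
    (hFz : ContinuousAt F z) :
    Tendsto (fun δ => ∫ y, F y * (2 * δ ^ 2 / (‖y - z‖ ^ 2 + δ ^ 2) ^ 2 * χ (y - z))) (𝓝[>] 0)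
      (𝓝 (potMass E * F z)) := by
  have hχz : Continuous fun y => χ (y - z) := χ.continuous.comp (continuous_sub_right z)
  have hint : Integrable fun y => F y * χ (y - z) :=
    hF.mul_bdd (c := 1) hχz.aestronglyMeasurable
      (.of_forall fun y => by simpa [abs_of_nonneg χ.nonneg] using χ.le_one)
  have h := tendsto_integral_laplacian_logPot_mul hint (hFz.mul hχz.continuousAt)
  simp only [sub_self, χ.one_of_mem_closedBall (mem_closedBall_self χ.rIn_pos.le),
    mul_one] at h
  exact h.congr fun δ => integral_congr_ae (.of_forall fun y => mul_left_comm _ _ _)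

lemma integral_mul_approx_eq (hδ : δ ≠ 0) (hR : χ.rIn + χ.rOut ≤ R) (hz : ‖z‖ < χ.rIn)
    (hint : IntegrableOn (fun x => v x / ‖x‖) (puncturedBall E R))
    (hM : ∀ φ : E → ℝ, ContDiff ℝ 2 φ → tsupport φ ⊆ ball 0 R →
      ∫ x in puncturedBall E R, v x * -Δ φ x =
        (∫ x in puncturedBall E R, φ x * -Δ v x) + M * φ 0) :
    ∫ y in puncturedBall E R, v y * (2 * δ ^ 2 / (‖y - z‖ ^ 2 + δ ^ 2) ^ 2 * χ (y - z)) =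
      (∫ y in puncturedBall E R, v y * bumpErr χ δ (y - z)) +
        (∫ y in puncturedBall E R, -Δ v y * bumpPot χ δ (y - z)) + M * logPot δ z := by
  have hpos (x : E) : 0 < ‖x‖ ^ 2 + δ ^ 2 := by positivity
  have hw : Continuous fun y => 2 * δ ^ 2 / (‖y - z‖ ^ 2 + δ ^ 2) ^ 2 * χ (y - z) :=
    (continuous_const.div (by fun_prop) fun y => (pow_pos (hpos _) 2).ne').mul
      (χ.continuous.comp (continuous_sub_right z))
  have hI₁ := integrableOn_mul_of_integrableOn_div_norm hint hw
    (χ.hasCompactSupport.comp_homeomorph (Homeomorph.subRight z)).mul_left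
  have hI₂ := integrableOn_mul_of_integrableOn_div_norm (w := fun y => bumpErr χ δ (y - z)) hint
    ((contDiff_bumpErr χ δ (n := 0)).continuous.comp (continuous_sub_right z))
    ((hasCompactSupport_bumpErr χ δ).comp_homeomorph (Homeomorph.subRight z))
  have hid := hM (fun y => bumpPot χ δ (y - z))
    ((contDiff_iff_contDiffAt.2 fun x => contDiffAt_bumpPot (n := 2) (hpos x)).comp
      (contDiff_id.sub contDiff_const)) (tsupport_bumpPot_sub_subset hR hz)
  simp only [laplacian_comp_sub, laplacian_bumpPot χ (hpos _), mul_comm (bumpPot _ _ _),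
    neg_sub, mul_sub] at hid
  rw [integral_sub hI₁ hI₂, zero_sub, bumpPot_eq_logPot (by simpa using hz.le), logPot,
    norm_neg, ← logPot] at hid
  linarith

lemma exists_representation (hR : R ≤ 1) (hχ : χ.rIn + χ.rOut ≤ R)
    (hv : ContDiffOn ℝ 2 v (puncturedBall E R))
    (hint : IntegrableOn (fun x => v x / ‖x‖) (puncturedBall E R))
    (hΔ : IntegrableOn (Δ v) (puncturedBall E R)) :
    ∃ (M : ℝ) (H : E → ℝ), ContDiff ℝ 1 H ∧ ∀ z ≠ 0, ‖z‖ < χ.rIn →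
      potMass E * v z = H z +
        (∫ y, (puncturedBall E R).indicator (fun x => -Δ v x) y * bumpPot χ 0 (y - z)) +
        M * logPot 0 z := by
  have hrIn := χ.rIn_pos
  have hrOut := χ.rIn_lt_rOut
  have hU := (isOpen_puncturedBall (E := E) (R := R)).measurableSet
  obtain ⟨M, hM⟩ := exists_setIntegral_mul_neg_laplacian (by linarith) hR hv hint hΔ
  have hV : Integrable ((puncturedBall E R).indicator v) :=
    (integrable_indicator_iff hU).2 (integrableOn_of_integrableOn_div_norm hint)
  have hF : Integrable ((puncturedBall E R).indicator fun x => -Δ v x) :=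
    (integrable_indicator_iff hU).2 hΔ.neg
  refine ⟨M, fun z => ∫ y, (puncturedBall E R).indicator v y * bumpErr χ 0 (y - z),
    contDiff_integral_mul_bumpErr χ hV, fun z hz0 hz => ?_⟩
  have hzR : z ∈ puncturedBall E R := ⟨norm_pos_iff.2 hz0, by linarith⟩
  have hzU : puncturedBall E R ∈ 𝓝 z := isOpen_puncturedBall.mem_nhds hzR
  have hFz : ContinuousAt ((puncturedBall E R).indicator fun x => -Δ v x) z :=
    ((continuousOn_laplacian isOpen_puncturedBall hv).neg.continuousAt hzU).congr
      (eqOn_indicator.symm.eventuallyEq_of_mem hzU)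
  have hleft := tendsto_integral_approx_mul χ hV
    ((hv.continuousOn.continuousAt hzU).congr (eqOn_indicator.symm.eventuallyEq_of_mem hzU))
  rw [indicator_of_mem hzR] at hleft
  refine tendsto_nhds_unique hleft ((((tendsto_integral_mul_bumpErr (by linarith) hV z).add
    (tendsto_integral_mul_bumpPot (by linarith) hF hFz)).add
    (((tendsto_logPot hz0).mono_left nhdsWithin_le_nhds).const_mul M)).congr' ?_)
  filter_upwards [self_mem_nhdsWithin] with δ (hδ : 0 < δ)
  simp only [integral_indicator_mul hU]
  exact (integral_mul_approx_eq hδ.ne' hχ hz hint hM).symm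

end Representation

/-- Maximise `e^v · (r - dist · z)` over the ball. -/
lemma exists_almost_max {X : Type*} [PseudoMetricSpace X] [ProperSpace X] {v : X → ℝ} {z : X}
    {r : ℝ} (hr : 0 < r) (hv : ContinuousOn v (closedBall z r)) :
    ∃ (z₁ : X) (d : ℝ), 0 < d ∧ d + dist z₁ z = r ∧ v z + Real.log r ≤ v z₁ + Real.log d ∧
      ∀ y ∈ ball z₁ (d / 2), v y ≤ v z₁ + Real.log 2 := by
  obtain ⟨z₁, -, hmax⟩ := (isCompact_closedBall z r).exists_isMaxOn
    ⟨z, mem_closedBall_self hr.le⟩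
    (hv.rexp.mul (by fun_prop : ContinuousOn (fun y => r - dist y z) (closedBall z r)))
  have hz := hmax (mem_closedBall_self hr.le)
  simp only [mem_ofPred_eq, Pi.mul_apply, dist_self, sub_zero] at hz
  have hd : 0 < r - dist z₁ z :=
    pos_of_mul_pos_right ((mul_pos (Real.exp_pos _) hr).trans_le hz) (Real.exp_pos _).le
  have hlog {y : X} {t : ℝ} (ht : 0 < t)
      (h : Real.exp (v y) * t ≤ Real.exp (v z₁) * (r - dist z₁ z)) :
      v y + Real.log t ≤ v z₁ + Real.log (r - dist z₁ z) := by
    simpa [Real.log_mul, ht.ne', hd.ne'] using Real.log_le_log (by positivity) h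
  refine ⟨z₁, r - dist z₁ z, hd, by ring, hlog hr hz, fun y hy => ?_⟩
  have hyz : (r - dist z₁ z) / 2 ≤ r - dist y z := by
    linarith [dist_triangle y z₁ z, mem_ball.1 hy]
  have hy' := hmax (mem_closedBall.2 (by linarith : dist y z ≤ r))
  have h := hlog (half_pos hd) ((mul_le_mul_of_nonneg_left hyz (Real.exp_pos _).le).trans hy')
  rw [Real.log_div hd.ne' two_ne_zero] at h
  linarith

lemma tendsto_div_of_linear_bounds {α : Type*} {l : Filter α} {u L : α → ℝ} {κ K M B : ℝ}
    (hL : Tendsto L l atTop) (hκ : 0 < κ) (hlow : ∀ᶠ x in l, -B + M * L x ≤ κ * u x)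
    (hup : ∀ᶠ ε in 𝓝[>] 0, ∃ B', ∀ᶠ x in l, (κ - K * ε) * u x ≤ B' + (M + ε) * L x) :
    Tendsto (fun x => u x / L x) l (𝓝 (M / κ)) := by
  have hdiv (B m k : ℝ) : Tendsto (fun x => (B / L x + m) / k) l (𝓝 (m / k)) := by
    simpa using ((hL.const_div_atTop B).add_const m).div_const k
  refine tendsto_order.2 ⟨fun b hb => ?_, fun b hb => ?_⟩
  · filter_upwards [hlow, hL.eventually_gt_atTop 0, (hdiv (-B) M κ).eventually (lt_mem_nhds hb)]
      with x hx hLx hbx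
    refine hbx.trans_le ?_
    rw [div_le_div_iff₀ hκ hLx, add_mul, div_mul_cancel₀ _ hLx.ne']
    linarith
  · have hk : Tendsto (fun ε => κ - K * ε) (𝓝[>] 0) (𝓝 κ) :=
      Continuous.tendsto' (by fun_prop) _ _ (by simp) |>.mono_left nhdsWithin_le_nhds
    have hm : Tendsto (fun ε => M + ε) (𝓝[>] 0) (𝓝 M) :=
      Continuous.tendsto' (by fun_prop) _ _ (by simp) |>.mono_left nhdsWithin_le_nhds
    have hev := ((hm.div hk hκ.ne').eventually (gt_mem_nhds hb)).and
      (hk.eventually (lt_mem_nhds hκ))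
    obtain ⟨ε, ⟨B', hB'⟩, hεb, hε⟩ := (hup.and hev).exists
    filter_upwards [hB', hL.eventually_gt_atTop 0,
      (hdiv B' (M + ε) (κ - K * ε)).eventually (gt_mem_nhds hεb)] with x hx hLx hbx
    refine lt_of_le_of_lt ?_ hbx
    rw [div_le_div_iff₀ hLx hε, add_mul, div_mul_cancel₀ _ hLx.ne']
    linarith

lemma tendsto_logPot_zero_atTop {E : Type*} [NormedAddCommGroup E] :
    Tendsto (logPot 0) (𝓝[≠] (0 : E)) atTop := by
  simp only [funext logPot_zero_left]
  exact tendsto_neg_atBot_atTop.comp (Real.tendsto_log_nhdsGT_zero.comp tendsto_norm_nhdsNE_zero)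

section Growth

variable {E : Type*} [NormedAddCommGroup E] [InnerProductSpace ℝ E] [FiniteDimensional ℝ E]
  [MeasurableSpace E] [BorelSpace E]

lemma setIntegral_ball_norm_rpow (p : ℝ) {s : ℝ} (hs : 0 < s) :
    ∫ x in ball (0 : E) s, ‖x‖ ^ p =
      s ^ (finrank ℝ E + p) * ∫ x in ball (0 : E) 1, ‖x‖ ^ p := by
  have h := Measure.setIntegral_comp_smul_of_pos (volume : Measure E) (fun x => ‖x‖ ^ p)
    (ball 0 1) hs
  simp only [smul_unitBall_of_pos hs, norm_smul, Real.norm_of_nonneg hs.le,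
    Real.mul_rpow hs.le (norm_nonneg _), integral_const_mul, smul_eq_mul] at h
  rw [Real.rpow_add hs, mul_assoc, h, Real.rpow_natCast, mul_inv_cancel_left₀ (by positivity)]

lemma exists_setIntegral_ball_le {F : E → ℝ} [Nontrivial E] (hF : Integrable F) {ε : ℝ}
    (hε : 0 < ε) : ∃ η, 0 < η ∧ η ≤ 1 ∧ ∫ y in ball (0 : E) η, F y ≤ ε := by
  have hball : Tendsto (fun η : ℝ => volume (ball (0 : E) η)) (𝓝[>] 0) (𝓝 0) := by
    have hpow : Tendsto (fun η : ℝ => ENNReal.ofReal (η ^ finrank ℝ E)) (𝓝[>] 0) (𝓝 0) :=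
      ENNReal.ofReal_zero ▸ ENNReal.tendsto_ofReal (Continuous.tendsto' (by fun_prop) _ _
        (by simp [finrank_pos.ne']) |>.mono_left nhdsWithin_le_nhds)
    have := ENNReal.Tendsto.mul_const hpow
      (.inr (measure_ball_lt_top (μ := volume) (x := (0 : E)) (r := 1)).ne)
    rw [zero_mul] at this
    refine this.congr' ?_
    filter_upwards [self_mem_nhdsWithin] with η (hη : 0 < η)
    exact (Measure.addHaar_ball volume 0 hη.le).symm
  obtain ⟨η, hη, hη0, hη1⟩ := ((hF.tendsto_setIntegral_nhds_zero hball).eventually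
    (ge_mem_nhds hε)).and (Ioc_mem_nhdsGT one_pos) |>.exists
  exact ⟨η, hη0, hη1, hη⟩

variable [Fact (finrank ℝ E = 2)] {χ : ContDiffBump (0 : E)} {F : E → ℝ} {s Λ η : ℝ} {z : E}

attribute [local instance] nontrivial_of_fact_finrank_eq_two

lemma integral_mul_bumpPot_zero_le (hχ : χ.rOut ≤ 1) (hF : Integrable F) (hs0 : 0 < s)
    (hs1 : s ≤ 1) (hΛ : ∀ y ∈ ball z s, |F y| ≤ Λ) :
    ∫ y, F y * bumpPot χ 0 (y - z) ≤
      Λ * (s * ∫ x in ball (0 : E) 1, ‖x‖⁻¹) + -Real.log s * ∫ y, |F y| := by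
  have hint : Integrable ((ball (0 : E) s).indicator fun x => ‖x‖⁻¹) :=
    (integrable_indicator_iff measurableSet_ball).2 (integrableOn_ball_inv_norm _)
  have hdom := (hint.comp_sub_right z).const_mul Λ
  have hFs := hF.abs.const_mul (-Real.log s)
  have hscale : ∫ x in ball (0 : E) s, ‖x‖⁻¹ = s * ∫ x in ball (0 : E) 1, ‖x‖⁻¹ := by
    simpa [Fact.out (p := finrank ℝ E = 2), Real.rpow_neg_one, show (2 : ℝ) + -1 = 1 by norm_num]
      using setIntegral_ball_norm_rpow (E := E) (-1) hs0
  calc ∫ y, F y * bumpPot χ 0 (y - z)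
      ≤ ∫ y, Λ * (ball (0 : E) s).indicator (fun x => ‖x‖⁻¹) (y - z) + -Real.log s * |F y| := by
        refine integral_mono_ae (integrable_mul_bumpPot_zero hχ hF hs0 hs1 hΛ) (hdom.add hFs) ?_
        filter_upwards [volume.ae_ne z] with y hy
        exact (le_abs_self _).trans (abs_mul_bumpPot_zero_le hχ hs0 hs1 (sub_ne_zero.2 hy) fun h =>
          hΛ y (by simpa [dist_eq_norm] using h))
    _ = _ := by
        rw [integral_add hdom hFs, integral_const_mul, integral_const_mul,
          integral_sub_right_eq_self ((ball (0 : E) s).indicator fun x => ‖x‖⁻¹),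
          integral_indicator measurableSet_ball, hscale]

lemma integral_mul_bumpPot_zero_le_add (hχ : χ.rOut ≤ 1) (hF : Integrable F) (hs0 : 0 < s)
    (hs1 : s ≤ 1) (hΛ : ∀ y ∈ ball z s, |F y| ≤ Λ) (hη0 : 0 < η) (hη1 : η ≤ 1)
    (hz : ‖z‖ ≤ η / 2) :
    ∫ y, F y * bumpPot χ 0 (y - z) ≤
      Λ * (s * ∫ x in ball (0 : E) 1, ‖x‖⁻¹) + -Real.log s * (∫ y in ball (0 : E) η, |F y|) +
        -Real.log (η / 2) * ∫ y, |F y| := by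
  have hball : MeasurableSet (ball (0 : E) η) := measurableSet_ball
  have hlog : 0 ≤ -Real.log (η / 2) := neg_nonneg.2 (Real.log_nonpos (by positivity) (by linarith))
  have hin (y) (hy : y ∈ ball z s) : |(ball (0 : E) η).indicator F y| ≤ Λ :=
    (norm_indicator_le_norm_self F y).trans (hΛ y hy)
  have hout (y) (hy : y ∈ ball z (η / 2)) : |(ball (0 : E) η)ᶜ.indicator F y| ≤ 0 := by
    have : y ∈ ball (0 : E) η := ball_subset_ball' (by rw [dist_zero_right]; linarith) hy
    simp [this]
  have hη : 0 < η / 2 := half_pos hη0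
  have hη' : η / 2 ≤ 1 := by linarith
  calc ∫ y, F y * bumpPot χ 0 (y - z)
      = (∫ y, (ball (0 : E) η).indicator F y * bumpPot χ 0 (y - z)) +
          ∫ y, (ball (0 : E) η)ᶜ.indicator F y * bumpPot χ 0 (y - z) := by
        rw [← integral_add
          (integrable_mul_bumpPot_zero hχ (hF.indicator hball) hs0 hs1 hin)
          (integrable_mul_bumpPot_zero hχ (hF.indicator hball.compl) hη hη' hout)]
        simp_rw [← add_mul, ← Pi.add_apply (M := fun _ => ℝ), indicator_self_add_compl]
    _ ≤ _ := add_le_add (integral_mul_bumpPot_zero_le hχ (hF.indicator hball) hs0 hs1 hin)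
        (integral_mul_bumpPot_zero_le hχ (hF.indicator hball.compl) hη hη' hout)
    _ ≤ _ := by
        have habs (U : Set E) (y : E) : |U.indicator F y| = U.indicator (fun y => |F y|) y :=
          norm_indicator_eq_indicator_norm F y
        simp only [habs, integral_indicator hball, integral_indicator hball.compl, zero_mul,
          zero_add]
        gcongr
        · exact .of_forall fun y => abs_nonneg _
        · exact hF.abs
        · exact Measure.restrict_le_self

end Growth

lemma puncturedBall_mem_nhdsNE {E : Type*} [NormedAddCommGroup E] {r : ℝ} (hr : 0 < r) :
    puncturedBall E r ∈ 𝓝[≠] (0 : E) := by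
  filter_upwards [self_mem_nhdsWithin, mem_nhdsWithin_of_mem_nhds (ball_mem_nhds 0 hr)]
    with z hz hzr
  exact ⟨norm_pos_iff.2 hz, by simpa using hzr⟩

lemma abs_logPot_zero_sub_le {E : Type*} [NormedAddCommGroup E] {z w : E} (hz : 0 < ‖z‖)
    (h₁ : ‖z‖ ≤ 2 * ‖w‖) (h₂ : ‖w‖ ≤ 2 * ‖z‖) :
    |logPot 0 w - logPot 0 z| ≤ Real.log 2 := by
  have hw : 0 < ‖w‖ := by linarith
  have h₁' := Real.log_le_log hz h₁
  have h₂' := Real.log_le_log hw h₂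
  rw [Real.log_mul two_ne_zero hw.ne'] at h₁'
  rw [Real.log_mul two_ne_zero hz.ne'] at h₂'
  rw [logPot_zero_left, logPot_zero_left, abs_le]
  constructor <;> linarith

section Riesz

variable {E : Type*} [NormedAddCommGroup E] [InnerProductSpace ℝ E] [FiniteDimensional ℝ E]
  [MeasurableSpace E] [BorelSpace E] {χ : ContDiffBump (0 : E)} {v F H : E → ℝ} {M C K : ℝ}

/-- The Riesz decomposition near `0` of a nonnegative superharmonic function `v` on a punctured
disk: up to the factor `potMass E`, it is the sum of a continuously differentiable function `H`, of
the logarithmic potential of a nonnegative density `F` (truncated by `χ`), and of the potential of a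
point mass `M` at `0`. -/
structure HasRieszDecomposition (χ : ContDiffBump (0 : E)) (v F H : E → ℝ) (M : ℝ) : Prop where
  rOut_lt_one : χ.rOut < 1
  continuousOn : ContinuousOn v (puncturedBall E χ.rIn)
  nonneg : ∀ z ∈ puncturedBall E χ.rIn, 0 ≤ v z
  integrable : Integrable F
  density_nonneg : ∀ y, 0 ≤ F y
  contDiff : ContDiff ℝ 1 H
  eq_add : ∀ z ∈ puncturedBall E χ.rIn, potMass E * v z =
    H z + (∫ y, F y * bumpPot χ 0 (y - z)) + M * logPot 0 z

lemma HasRieszDecomposition.exists_abs_le (h : HasRieszDecomposition χ v F H M) :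
    ∃ B, ∀ z ∈ puncturedBall E χ.rIn, |H z| ≤ B := by
  obtain ⟨B, hB⟩ := (isCompact_closedBall (0 : E) χ.rIn).exists_bound_of_continuousOn
    h.contDiff.continuous.continuousOn
  exact ⟨B, fun z hz => hB z (by simpa using hz.2.le)⟩

lemma HasRieszDecomposition.exists_le_potMass_mul (h : HasRieszDecomposition χ v F H M) :
    ∃ B, ∀ z ∈ puncturedBall E χ.rIn, -B + M * logPot 0 z ≤ potMass E * v z := by
  obtain ⟨B, hB⟩ := h.exists_abs_le
  refine ⟨B, fun z hz => ?_⟩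
  have hpot : 0 ≤ ∫ y, F y * bumpPot χ 0 (y - z) := integral_nonneg fun y =>
    mul_nonneg (h.density_nonneg y) (bumpPot_zero_nonneg h.rOut_lt_one.le _)
  linarith [h.eq_add z hz, neg_le_of_abs_le (hB z hz)]

variable [Fact (finrank ℝ E = 2)]

attribute [local instance] nontrivial_of_fact_finrank_eq_two

lemma NonnegSuperharmonicOn.exists_hasRieszDecomposition {R r : ℝ}
    (h : NonnegSuperharmonicOn v (puncturedBall E R)) (hR : R ≤ 1) (hr : r < R)
    (hχ : χ.rIn + χ.rOut ≤ r) :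
    ∃ M H, HasRieszDecomposition χ v ((puncturedBall E r).indicator fun x => -Δ v x) H M := by
  have hr' := h.mono (puncturedBall_mono hr.le)
  have hin : χ.rIn ≤ r := by linarith [χ.rOut_pos]
  have hΔ := h.integrableOn_laplacian hR hr
  obtain ⟨M, H, hH, heq⟩ := exists_representation (hr.le.trans hR) hχ hr'.contDiffOn
    (h.integrableOn_div_norm hR hr) hΔ
  exact ⟨M, H,
    { rOut_lt_one := by linarith [χ.rIn_pos]
      continuousOn := hr'.contDiffOn.continuousOn.mono (puncturedBall_mono hin)
      nonneg := fun z hz => hr'.nonneg z (puncturedBall_mono hin hz)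
      integrable := (integrable_indicator_iff isOpen_puncturedBall.measurableSet).2 hΔ.neg
      density_nonneg := indicator_nonneg hr'.neg_laplacian_nonneg
      contDiff := hH
      eq_add := fun z hz => heq z (norm_pos_iff.1 hz.1) hz.2 }⟩

lemma integral_mul_bumpPot_zero_le_of_le_exp {ρ t Λ η : ℝ} {z : E} (hχ : χ.rOut ≤ 1)
    (hF : Integrable F) (hF0 : ∀ y, 0 ≤ F y) (hρ0 : 0 < ρ) (hρ1 : ρ ≤ 1) (ht : 0 ≤ t)
    (hΛ : ∀ y ∈ ball z ρ, F y ≤ Λ * Real.exp t) (hη0 : 0 < η) (hη1 : η ≤ 1) (hz : ‖z‖ ≤ η / 2) :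
    ∫ y, F y * bumpPot χ 0 (y - z) ≤
      Λ * (∫ x in ball (0 : E) 1, ‖x‖⁻¹) + (t - Real.log ρ) * (∫ y in ball (0 : E) η, F y) +
        -Real.log (η / 2) * ∫ y, F y := by
  -- the radius balancing the two terms of the bound
  set s := min ρ (Real.exp (-t))
  have hs0 : 0 < s := lt_min hρ0 (Real.exp_pos _)
  have hΛ0 : 0 ≤ Λ := nonneg_of_mul_nonneg_left ((hF0 z).trans (hΛ z (mem_ball_self hρ0)))
    (Real.exp_pos t)
  have hs : -Real.log s ≤ t - Real.log ρ := by
    have hρ := Real.log_nonpos hρ0.le hρ1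
    rcases min_choice ρ (Real.exp (-t)) with hmin | hmin <;>
      simp only [s, hmin, Real.log_exp] <;> linarith
  have hΛs : Λ * Real.exp t * s ≤ Λ := calc
    Λ * Real.exp t * s ≤ Λ * Real.exp t * Real.exp (-t) := by gcongr; exact min_le_right _ _
    _ = Λ := by rw [mul_assoc, ← Real.exp_add, add_neg_cancel, Real.exp_zero, mul_one]
  refine (integral_mul_bumpPot_zero_le_add (Λ := Λ * Real.exp t) hχ hF hs0
    ((min_le_left _ _).trans hρ1) (fun y hy => ?_) hη0 hη1 hz).trans ?_
  · rw [abs_of_nonneg (hF0 y)]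
    exact hΛ y (ball_subset_ball (min_le_left _ _) hy)
  · simp only [abs_of_nonneg (hF0 _)]
    rw [← mul_assoc]
    gcongr
    exact setIntegral_nonneg measurableSet_ball fun y _ => hF0 y

lemma HasRieszDecomposition.exists_potMass_sub_mul_le (h : HasRieszDecomposition χ v F H M)
    (hF : ∀ y ∈ puncturedBall E χ.rIn, F y ≤ C * Real.exp (K * v y)) (hK : 0 ≤ K) {ε : ℝ}
    (hε : 0 < ε) :
    ∃ B r, 0 < r ∧ ∀ z ∈ puncturedBall E r, ∀ d, 0 < d → d ≤ 1 →
      ball z (d / 2) ⊆ puncturedBall E χ.rIn → (∀ y ∈ ball z (d / 2), v y ≤ v z + Real.log 2) →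
        (potMass E - K * ε) * v z ≤ B + M * logPot 0 z - ε * Real.log d := by
  obtain ⟨B, hB⟩ := h.exists_abs_le
  obtain ⟨η, hη0, hη1, hη⟩ := exists_setIntegral_ball_le h.integrable hε
  refine ⟨B + C * Real.exp (K * Real.log 2) * (∫ x in ball (0 : E) 1, ‖x‖⁻¹) +
    -Real.log (η / 2) * (∫ y, F y) + ε * Real.log 2, η / 2, by positivity,
    fun z hz d hd0 hd1 hd hv => ?_⟩
  have hC : 0 ≤ C := by
    have hz' := hd (mem_ball_self (half_pos hd0))
    exact nonneg_of_mul_nonneg_left ((h.density_nonneg z).trans (hF z hz')) (Real.exp_pos _)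
  have hzr := hd (mem_ball_self (half_pos hd0))
  have hpot := integral_mul_bumpPot_zero_le_of_le_exp (t := K * v z)
    (Λ := C * Real.exp (K * Real.log 2)) h.rOut_lt_one.le h.integrable h.density_nonneg
    (half_pos hd0) (by linarith) (mul_nonneg hK (h.nonneg z hzr)) (fun y hy => ?_) hη0 hη1 hz.2.le
  · have hsmall : (K * v z - Real.log (d / 2)) * (∫ y in ball (0 : E) η, F y) ≤
        (K * v z - Real.log (d / 2)) * ε := by
      have hv0 := mul_nonneg hK (h.nonneg z hzr)
      have hlog := Real.log_nonpos (half_pos hd0).le (by linarith)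
      gcongr
      linarith
    rw [Real.log_div hd0.ne' two_ne_zero] at hpot hsmall
    linarith [h.eq_add z hzr, le_of_abs_le (hB z hzr)]
  · calc F y ≤ C * Real.exp (K * v y) := hF y (hd hy)
      _ ≤ C * Real.exp (K * (v z + Real.log 2)) := by gcongr; exact hv y hy
      _ = C * Real.exp (K * Real.log 2) * Real.exp (K * v z) := by
        rw [mul_assoc, ← Real.exp_add]; ring_nf

lemma norm_mem_Icc_of_mem_closedBall_half_norm {F : Type*} [SeminormedAddCommGroup F] {y z : F}
    (hy : y ∈ closedBall z (‖z‖ / 2)) : ‖y‖ ∈ Icc (‖z‖ / 2) (3 * ‖z‖ / 2) := by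
  rw [mem_closedBall, dist_eq_norm] at hy
  constructor <;> linarith [norm_sub_norm_le y z, norm_sub_norm_le z y, norm_sub_rev z y]

lemma HasRieszDecomposition.exists_eventually_le (h : HasRieszDecomposition χ v F H M)
    (hF : ∀ y ∈ puncturedBall E χ.rIn, F y ≤ C * Real.exp (K * v y)) (hK : 0 ≤ K) {ε : ℝ}
    (hε : 0 < ε) (hKε : (K + 1) * ε ≤ potMass E) :
    ∃ B, ∀ᶠ z in 𝓝[≠] 0, (potMass E - K * ε) * v z ≤ B + (M + ε) * logPot 0 z := by
  obtain ⟨B, r, hr, hB⟩ := h.exists_potMass_sub_mul_le hF hK hε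
  refine ⟨B + (|M| + ε) * Real.log 2, ?_⟩
  have hr' : 0 < min (min r χ.rIn) 1 / 2 := by have := χ.rIn_pos; positivity
  filter_upwards [puncturedBall_mem_nhdsNE hr'] with z ⟨hz0, hz⟩
  have hz1 : 2 * ‖z‖ < r ∧ 2 * ‖z‖ < χ.rIn ∧ 2 * ‖z‖ < 1 := by
    simpa only [lt_min_iff, and_assoc] using (lt_div_iff₀' two_pos).1 hz
  have hsub : closedBall z (‖z‖ / 2) ⊆ puncturedBall E χ.rIn := fun y hy => by
    obtain ⟨h₁, h₂⟩ := norm_mem_Icc_of_mem_closedBall_half_norm hy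
    exact ⟨by linarith, by linarith⟩
  obtain ⟨z₁, d, hd, hdz, hmax, hball⟩ := exists_almost_max (half_pos hz0)
    (h.continuousOn.mono hsub)
  have hdist : 0 ≤ dist z₁ z := dist_nonneg
  obtain ⟨hz₁, hz₁'⟩ := norm_mem_Icc_of_mem_closedBall_half_norm
    (mem_closedBall.2 (by linarith : dist z₁ z ≤ ‖z‖ / 2))
  have hmain := hB z₁ ⟨by linarith, by linarith⟩ d hd (by linarith)
    ((ball_subset_closedBall.trans (closedBall_subset_closedBall' (by linarith))).trans hsub) hball
  have hlog : M * logPot 0 z₁ ≤ M * logPot 0 z + |M| * Real.log 2 := by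
    have := mul_le_mul_of_nonneg_left (abs_logPot_zero_sub_le (w := z₁) hz0 (by linarith)
      (by linarith)) (abs_nonneg M)
    rw [← abs_mul] at this
    linarith [le_of_abs_le this]
  have hd' : Real.log d ≤ Real.log (‖z‖ / 2) :=
    Real.log_le_log hd (by linarith)
  have hk := mul_le_mul_of_nonneg_left hmax (by linarith : 0 ≤ potMass E - K * ε)
  have hdk := mul_le_mul_of_nonneg_left hd' (by linarith : 0 ≤ potMass E - (K + 1) * ε)
  rw [Real.log_div hz0.ne' two_ne_zero] at hk hdk
  simp only [logPot_zero_left] at hlog hmain ⊢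
  linarith

theorem HasRieszDecomposition.tendsto_div_logPot (h : HasRieszDecomposition χ v F H M)
    (hF : ∀ y ∈ puncturedBall E χ.rIn, F y ≤ C * Real.exp (K * v y)) (hK : 0 ≤ K) :
    Tendsto (fun z => v z / logPot 0 z) (𝓝[≠] 0) (𝓝 (M / potMass E)) := by
  obtain ⟨B, hB⟩ := h.exists_le_potMass_mul
  refine tendsto_div_of_linear_bounds tendsto_logPot_zero_atTop potMass_pos
    (eventually_of_mem (puncturedBall_mem_nhdsNE χ.rIn_pos) hB) ?_ (K := K)
  filter_upwards [Ioc_mem_nhdsGT (div_pos (potMass_pos (E := E)) (by linarith : 0 < K + 1))]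
    with ε hε
  exact h.exists_eventually_le hF hK hε.1 ((le_div_iff₀' (by linarith)).1 hε.2)

end Riesz

section LpKernel

lemma tendsto_eLpNorm_sub_of_dominated {α ι G : Type*} [MeasurableSpace α] {μ : Measure α}
    [NormedAddCommGroup G] {l : Filter ι} [l.IsCountablyGenerated] {q : ℝ≥0∞} {f : ι → α → G}
    {g : α → G} {b : α → ℝ} (hq0 : q ≠ 0) (hq : q ≠ ∞) (hb : MemLp b q μ)
    (hf : ∀ᶠ i in l, AEStronglyMeasurable (f i) μ) (hg : AEStronglyMeasurable g μ)
    (hfb : ∀ᶠ i in l, ∀ᵐ x ∂μ, ‖f i x‖ ≤ b x) (hgb : ∀ᵐ x ∂μ, ‖g x‖ ≤ b x)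
    (hlim : ∀ᵐ x ∂μ, Tendsto (fun i => f i x) l (𝓝 (g x))) :
    Tendsto (fun i => eLpNorm (f i - g) q μ) l (𝓝 0) := by
  have hq' : 0 < q.toReal := ENNReal.toReal_pos hq0 hq
  have hcont : Continuous fun t : ℝ≥0∞ => t ^ q.toReal := ENNReal.continuous_rpow_const
  have hbound : ∀ᶠ i in l, ∀ᵐ x ∂μ, ‖(f i - g) x‖ₑ ^ q.toReal ≤ ‖(b + b) x‖ₑ ^ q.toReal := by
    filter_upwards [hfb] with i hi
    filter_upwards [hi, hgb] with x hfx hgx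
    exact ENNReal.rpow_le_rpow (enorm_le_iff_norm_le.2 ((norm_sub_le _ _).trans
      ((add_le_add hfx hgx).trans (le_abs_self _)))) hq'.le
  have hint := tendsto_lintegral_filter_of_dominated_convergence' (f := fun _ => 0) _
    (hf.mono fun i hi => (hi.sub hg).enorm.pow_const q.toReal) hbound
    (lintegral_rpow_enorm_lt_top_of_eLpNorm_lt_top hq0 hq (hb.add hb).2).ne
    (hlim.mono fun x hx => by
      simpa [hq', Function.comp_def] using (hcont.tendsto _).comp (hx.sub_const (g x)).enorm)
  simp only [eLpNorm_eq_lintegral_rpow_enorm_toReal hq0 hq]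
  simpa [hq', Function.comp_def] using
    ((ENNReal.continuous_rpow_const (y := 1 / q.toReal)).tendsto _).comp hint

variable {E G : Type*} [NormedAddCommGroup E] [MeasurableSpace E] [BorelSpace E]
  [NormedAddCommGroup G] [NormedSpace ℝ G] {μ : Measure E}
  {F : E → ℝ} {p q : ℝ≥0∞} [ENNReal.HolderConjugate p q]

section Holder

variable [μ.IsAddLeftInvariant] [μ.IsNegInvariant]

lemma enorm_integral_smul_comp_sub_le {k : E → G} (hF : AEStronglyMeasurable F μ)
    (hk : AEStronglyMeasurable k μ) (z : E) :
    ‖∫ y, F y • k (z - y) ∂μ‖ₑ ≤ eLpNorm F p μ * eLpNorm k q μ := by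
  have hz := μ.measurePreserving_sub_left z
  calc ‖∫ y, F y • k (z - y) ∂μ‖ₑ ≤ eLpNorm (F • (k ∘ fun y => z - y)) 1 μ := by
        rw [eLpNorm_one_eq_lintegral_enorm]
        exact enorm_integral_le_lintegral_enorm _
    _ ≤ eLpNorm F p μ * eLpNorm (k ∘ fun y => z - y) q μ :=
        eLpNorm_smul_le_mul_eLpNorm (hk.comp_measurePreserving hz) hF
    _ = _ := by rw [eLpNorm_comp_measurePreserving hk hz]

lemma integrable_smul_comp_sub {k : E → G} (hF : MemLp F p μ) (hk : MemLp k q μ) (z : E) :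
    Integrable (fun y => F y • k (z - y)) μ :=
  memLp_one_iff_integrable.1
    ((hk.comp_measurePreserving (μ.measurePreserving_sub_left z)).smul hF)

lemma tendstoUniformly_integral_smul_comp_sub {ι : Type*} {l : Filter ι} {g : ι → E → G}
    {g₀ : E → G} (hF : MemLp F p μ) (hg : ∀ i, MemLp (g i) q μ) (hg₀ : MemLp g₀ q μ)
    (h : Tendsto (fun i => eLpNorm (g i - g₀) q μ) l (𝓝 0)) :
    TendstoUniformly (fun i z => ∫ y, F y • g i (z - y) ∂μ) (fun z => ∫ y, F y • g₀ (z - y) ∂μ)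
      l := by
  have hlim : Tendsto (fun i => eLpNorm F p μ * eLpNorm (g i - g₀) q μ) l (𝓝 0) := by
    simpa using ENNReal.Tendsto.const_mul h (.inr hF.2.ne)
  refine EMetric.tendstoUniformly_iff.2 fun ε hε => ?_
  filter_upwards [hlim.eventually_lt_const hε] with i hi z
  rw [edist_comm, edist_eq_enorm_sub, ← integral_sub (integrable_smul_comp_sub hF (hg i) z)
    (integrable_smul_comp_sub hF hg₀ z)]
  simp only [← smul_sub]
  exact (enorm_integral_smul_comp_sub_le hF.1 ((hg i).1.sub hg₀.1) z).trans_lt hi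

end Holder

lemma contDiff_one_integral_mul_comp_sub [NormedSpace ℝ E] [FiniteDimensional ℝ E]
    [μ.IsAddHaarMeasure] {ι : Type*} {l : Filter ι} [l.NeBot] {Φ : ι → E → ℝ} {Φ₀ : E → ℝ}
    {G : E → E →L[ℝ] ℝ} (hF : MemLp F p μ) (hΦ : ∀ i, ContDiff ℝ 1 (Φ i))
    (hsupp : ∀ i, HasCompactSupport (Φ i)) (hΦ₀ : MemLp Φ₀ q μ) (hG : MemLp G q μ)
    (hlim : Tendsto (fun i => eLpNorm (Φ i - Φ₀) q μ) l (𝓝 0))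
    (hlim' : Tendsto (fun i => eLpNorm (fderiv ℝ (Φ i) - G) q μ) l (𝓝 0)) :
    ContDiff ℝ 1 fun z => ∫ y, F y * Φ₀ (z - y) ∂μ := by
  have hloc : LocallyIntegrable F μ := hF.locallyIntegrable (ENNReal.HolderConjugate.one_le p q)
  have hcont (i) : Continuous (fderiv ℝ (Φ i)) := (hΦ i).continuous_fderiv one_ne_zero
  have hderiv (i) (z : E) : HasFDerivAt (fun z => ∫ y, F y * Φ i (z - y) ∂μ)
      (∫ y, F y • fderiv ℝ (Φ i) (z - y) ∂μ) z :=
    (hsupp i).hasFDerivAt_convolution_right (.mul ℝ ℝ) hloc (hΦ i) z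
  have hderiv_cont (i) : Continuous fun z => ∫ y, F y • fderiv ℝ (Φ i) (z - y) ∂μ :=
    ((hsupp i).fderiv ℝ).continuous_convolution_right (.lsmul ℝ ℝ) hloc (hcont i)
  have hunif' := tendstoUniformly_integral_smul_comp_sub hF
    (fun i => (hcont i).memLp_of_hasCompactSupport ((hsupp i).fderiv ℝ)) hG hlim'
  have hunif := tendstoUniformly_integral_smul_comp_sub hF
    (fun i => (hΦ i).continuous.memLp_of_hasCompactSupport (hsupp i)) hΦ₀ hlim
  exact contDiff_one_iff_hasFDerivAt.2 ⟨_, hunif'.continuous (.of_forall hderiv_cont),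
    hasFDerivAt_of_tendstoUniformly hunif' hderiv fun z => hunif.tendsto_at z⟩

end LpKernel

section PotentialRegularity

variable {E : Type*} [NormedAddCommGroup E] [InnerProductSpace ℝ E] [FiniteDimensional ℝ E]
  {χ : ContDiffBump (0 : E)} {x : E} {δ : ℝ}

lemma fderiv_bumpPot (h : 0 < ‖x‖ ^ 2 + δ ^ 2) :
    fderiv ℝ (bumpPot χ δ) x = χ x • fderiv ℝ (logPot δ) x + logPot δ x • fderiv ℝ χ x :=
  fderiv_fun_mul ((χ.contDiffAt (n := 1)).differentiableAt (by simp))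
    ((contDiffAt_logPot h (n := 1)).differentiableAt (by simp))

lemma tendsto_fderiv_bumpPot (χ : ContDiffBump (0 : E)) (hx : x ≠ 0) :
    Tendsto (fun δ => fderiv ℝ (bumpPot χ δ) x) (𝓝 0) (𝓝 (fderiv ℝ (bumpPot χ 0) x)) := by
  have hadd : ContinuousAt (fun δ : ℝ => ‖x‖ ^ 2 + δ ^ 2) 0 := by fun_prop
  have hpos (δ : ℝ) := norm_sq_add_sq_pos (δ := δ) hx
  have hlog : Tendsto (fun δ => fderiv ℝ (logPot δ) x) (𝓝 0) (𝓝 (fderiv ℝ (logPot 0) x)) := by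
    simp only [fderiv_logPot (hpos _)]
    exact ((hadd.inv₀ (hpos 0).ne').tendsto.smul_const (innerSL ℝ x)).neg
  simp only [fderiv_bumpPot (hpos _)]
  exact (hlog.const_smul (χ x)).add ((tendsto_logPot hx).smul_const (fderiv ℝ χ x))

lemma abs_bumpPot_le_inv_norm (hδ : χ.rOut ^ 2 + δ ^ 2 ≤ 1) (hx : x ≠ 0) :
    |bumpPot χ δ x| ≤ ‖x‖⁻¹ := by
  rw [abs_of_nonneg (bumpPot_nonneg hδ x)]
  exact (bumpPot_le_zero_left χ δ hx).trans (bumpPot_zero_le_inv_norm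
    (by nlinarith [sq_nonneg δ]) hx)

lemma exists_norm_fderiv_bumpPot_le (χ : ContDiffBump (0 : E)) :
    ∃ D, ∀ δ, χ.rOut ^ 2 + δ ^ 2 ≤ 1 → ∀ x ≠ 0, ‖fderiv ℝ (bumpPot χ δ) x‖ ≤ D * ‖x‖⁻¹ := by
  obtain ⟨B, hB⟩ := ((χ.contDiff (n := 1)).continuous_fderiv
    one_ne_zero).bounded_above_of_compact_support (χ.hasCompactSupport.fderiv ℝ)
  refine ⟨1 + B, fun δ hδ x hx => ?_⟩
  have hlog : ‖logPot δ x • fderiv ℝ χ x‖ ≤ B * ‖x‖⁻¹ := by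
    by_cases hxχ : x ∈ tsupport χ
    · have hle : ‖x‖ ≤ χ.rOut := by simpa [χ.tsupport_eq] using hxχ
      have h0 : 0 ≤ logPot δ x := logPot_nonneg (hδ.trans' (by gcongr))
      have h1 : logPot δ x ≤ ‖x‖⁻¹ := by
        refine (logPot_le_zero_left δ hx).trans ?_
        rw [logPot_zero_left, ← Real.log_inv]
        exact Real.log_le_self (by positivity)
      rw [norm_smul, Real.norm_of_nonneg h0, mul_comm]
      exact mul_le_mul (hB x) h1 h0 ((norm_nonneg _).trans (hB x))
    · have hB0 : 0 ≤ B := (norm_nonneg _).trans (hB 0)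
      have h0 : fderiv ℝ χ x = 0 := by
        rw [(notMem_tsupport_iff_eventuallyEq.1 hxχ).fderiv_eq]
        exact fderiv_const_apply _
      rw [h0, smul_zero, norm_zero]
      positivity
  rw [fderiv_bumpPot (norm_sq_add_sq_pos hx), add_mul]
  refine (norm_add_le _ _).trans (add_le_add ?_ hlog)
  rw [norm_smul, Real.norm_of_nonneg χ.nonneg]
  exact mul_le_mul χ.le_one (norm_fderiv_logPot_le hx) (norm_nonneg _) zero_le_one

variable [MeasurableSpace E] [BorelSpace E]

lemma memLp_indicator_ball_norm_rpow [Nontrivial E] {p : ℝ} {q : ℝ≥0∞} (hq0 : q ≠ 0) (hq : q ≠ ∞)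
    (hpq : -(finrank ℝ E : ℝ) < p * q.toReal) (s : ℝ) :
    MemLp ((ball (0 : E) s).indicator fun x => ‖x‖ ^ p) q := by
  have hmeas : Measurable fun x : E => ‖x‖ ^ p := measurable_norm.pow_const p
  rw [memLp_indicator_iff_restrict measurableSet_ball,
    ← integrable_norm_rpow_iff hmeas.aestronglyMeasurable hq0 hq]
  refine (integrableOn_ball_norm_rpow hpq s).congr_fun (fun x _ => ?_) measurableSet_ball
  dsimp only
  rw [Real.norm_of_nonneg (by positivity), Real.rpow_mul (norm_nonneg x)]

variable [Fact (finrank ℝ E = 2)] {F : E → ℝ} {p q : ℝ≥0∞}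

lemma memLp_and_tendsto_eLpNorm_sub_of_le_inv_norm {G : Type*} [NormedAddCommGroup G]
    {k : ℝ → E → G} {D : ℝ} (hq0 : q ≠ 0) (hq : q < 2) (hχ : χ.rOut < 1)
    (hk : ∀ δ, AEStronglyMeasurable (k δ)) (hzero : ∀ δ x, χ.rOut < ‖x‖ → k δ x = 0)
    (hbound : ∀ δ, χ.rOut ^ 2 + δ ^ 2 ≤ 1 → ∀ x ≠ 0, ‖k δ x‖ ≤ D * ‖x‖⁻¹)
    (hlim : ∀ x ≠ 0, Tendsto (fun δ => k δ x) (𝓝 0) (𝓝 (k 0 x))) :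
    MemLp (k 0) q ∧ Tendsto (fun δ => eLpNorm (k δ - k 0) q) (𝓝 0) (𝓝 0) := by
  have : Nontrivial E := nontrivial_of_fact_finrank_eq_two
  have hqtop : q ≠ ∞ := hq.ne_top
  have hq2 : -(finrank ℝ E : ℝ) < -1 * q.toReal := by
    have := (ENNReal.toReal_lt_toReal hqtop ENNReal.ofNat_ne_top).2 hq
    rw [Fact.out (p := finrank ℝ E = 2)]
    simpa using this
  have hb := (memLp_indicator_ball_norm_rpow hq0 hqtop hq2 1).const_mul D
  have hle (δ) (hδ : χ.rOut ^ 2 + δ ^ 2 ≤ 1) :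
      ∀ᵐ x, ‖k δ x‖ ≤ D * (ball (0 : E) 1).indicator (fun x => ‖x‖ ^ (-1 : ℝ)) x := by
    filter_upwards [volume.ae_ne 0] with x hx
    by_cases h1 : x ∈ ball 0 1
    · simpa [indicator_of_mem h1, Real.rpow_neg_one] using hbound δ hδ x hx
    · rw [indicator_of_notMem h1, hzero δ x (hχ.trans_le (by simpa using h1))]
      simp
  have hev := eventually_sq_add_sq_le_one χ.rOut_pos.le hχ
  refine ⟨hb.mono' (hk 0) (hle 0 hev.self_of_nhds), tendsto_eLpNorm_sub_of_dominated hq0 hqtop hb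
    (.of_forall hk) (hk 0) (hev.mono hle) (hle 0 hev.self_of_nhds) ?_⟩
  filter_upwards [volume.ae_ne 0] with x hx using hlim x hx

lemma contDiff_integral_mul_bumpPot_zero [ENNReal.HolderConjugate p q] (hχ : χ.rOut < 1)
    (hF : MemLp F p) (hq : q < 2) : ContDiff ℝ 1 fun z => ∫ y, F y * bumpPot χ 0 (y - z) := by
  obtain ⟨D, hD⟩ := exists_norm_fderiv_bumpPot_le χ
  have hq0 : q ≠ 0 := (ENNReal.HolderConjugate.pos q p).ne'
  have hpot := memLp_and_tendsto_eLpNorm_sub_of_le_inv_norm (D := 1) hq0 hq hχ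
    (fun δ => (measurable_bumpPot χ δ).aestronglyMeasurable)
    (fun δ x hx => bumpPot_eq_zero hx.le)
    (fun δ hδ x hx => by simpa using abs_bumpPot_le_inv_norm hδ hx)
    fun x hx => (tendsto_logPot hx).const_mul (χ x)
  have hgrad := memLp_and_tendsto_eLpNorm_sub_of_le_inv_norm hq0 hq hχ
    (fun δ => (measurable_fderiv ℝ (bumpPot χ δ)).aestronglyMeasurable)
    (fun δ x hx => image_eq_zero_of_notMem_tsupport fun h => hx.not_ge <| by
      simpa [χ.tsupport_eq] using tsupport_mul_subset_left (tsupport_fderiv_subset ℝ h)) hD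
    fun x hx => tendsto_fderiv_bumpPot χ hx
  have hδ := tendsto_one_div_add_atTop_nhds_zero_nat (𝕜 := ℝ)
  have hδ0 (n : ℕ) (x : E) : 0 < ‖x‖ ^ 2 + (1 / ((n : ℝ) + 1)) ^ 2 := by positivity
  simp only [bumpPot_sub_comm χ 0 _]
  exact contDiff_one_integral_mul_comp_sub hF
    (fun n => contDiff_iff_contDiffAt.2 fun x => contDiffAt_bumpPot (hδ0 n x) (n := 1))
    (fun n => hasCompactSupport_bumpPot χ _) hpot.1 hgrad.1 (hpot.2.comp hδ) (hgrad.2.comp hδ)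

end PotentialRegularity

section Dichotomy

lemma laplacian_sub_const {E : Type*} [NormedAddCommGroup E] [InnerProductSpace ℝ E]
    [FiniteDimensional ℝ E] {v : E → ℝ} {z : E} (hv : ContDiffAt ℝ 2 v z) (c : ℝ) :
    Δ (fun x => v x - c) z = Δ v z :=
  (hv.laplacian_sub contDiffAt_const).trans (by simp)

lemma NonnegSuperharmonicOn.sub_const {E : Type*} [NormedAddCommGroup E] [InnerProductSpace ℝ E]
    [FiniteDimensional ℝ E] {v : E → ℝ} {U : Set E} {c : ℝ} (hU : IsOpen U)
    (hv : ContDiffOn ℝ 2 v U) (hc : ∀ ⦃z⦄, z ∈ U → c ≤ v z) (hΔ : ∀ z ∈ U, 0 ≤ -Δ v z) :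
    NonnegSuperharmonicOn (fun x => v x - c) U :=
  ⟨hv.sub contDiffOn_const, fun _ hz => sub_nonneg.2 (hc hz), fun z hz =>
    (laplacian_sub_const (hv.contDiffAt (hU.mem_nhds hz)) c).symm ▸ hΔ z hz⟩

lemma neg_laplacian_sub_const_le {E : Type*} [NormedAddCommGroup E] [InnerProductSpace ℝ E]
    [FiniteDimensional ℝ E] {v : E → ℝ} {z : E} {c C K : ℝ} (hv : ContDiffAt ℝ 2 v z)
    (hc : c ≤ v z) (hΔ : 0 ≤ -Δ v z) (hexp : -Δ v z ≤ C * Real.exp (K * v z)) :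
    -Δ (fun x => v x - c) z ≤ C * Real.exp (K * c) * Real.exp (max K 0 * (v z - c)) := by
  have hC : 0 ≤ C := nonneg_of_mul_nonneg_left (hΔ.trans hexp) (Real.exp_pos _)
  rw [laplacian_sub_const hv, mul_assoc, ← Real.exp_add]
  refine hexp.trans ?_
  gcongr
  linarith [mul_le_mul_of_nonneg_right (le_max_left K 0) (sub_nonneg.2 hc)]

lemma exp_half_logPot_zero {E : Type*} [NormedAddCommGroup E] {z : E} (hz : z ≠ 0) :
    Real.exp (logPot 0 z / 2) = ‖z‖ ^ (-1 / 2 : ℝ) := by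
  rw [logPot_zero_left, Real.rpow_def_of_pos (norm_pos_iff.2 hz)]
  ring_nf

variable {E : Type*} [NormedAddCommGroup E] [InnerProductSpace ℝ E] [FiniteDimensional ℝ E]
  {χ : ContDiffBump (0 : E)} {v F H : E → ℝ} {C K R : ℝ}

lemma NonnegSuperharmonicOn.exists_neg_laplacian_le_rpow
    (h : NonnegSuperharmonicOn v (puncturedBall E R)) (hR0 : 0 < R)
    (hexp : ∀ y ∈ puncturedBall E R, -Δ v y ≤ C * Real.exp (K * v y))
    (hlim : Tendsto (fun z => v z / logPot 0 z) (𝓝[≠] 0) (𝓝 0)) :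
    ∃ r, 0 < r ∧ r ≤ R ∧ ∀ y ∈ puncturedBall E r, -Δ v y ≤ C * ‖y‖ ^ (-1 / 2 : ℝ) := by
  have hlimK : Tendsto (fun z => K * (v z / logPot 0 z)) (𝓝[≠] 0) (𝓝 0) := by
    simpa using hlim.const_mul K
  have hev : ∀ᶠ z in 𝓝[≠] 0, K * v z ≤ logPot 0 z / 2 := by
    filter_upwards [hlimK.eventually_lt_const one_half_pos,
      tendsto_logPot_zero_atTop.eventually_gt_atTop 0] with z hz hpos
    rw [← mul_div_assoc, div_lt_iff₀ hpos] at hz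
    linarith
  obtain ⟨r, hr, hball⟩ := Metric.mem_nhdsWithin_iff.1 hev
  refine ⟨min r R, lt_min hr hR0, min_le_right _ _, fun y hy => ?_⟩
  have hyR := puncturedBall_mono (min_le_right r R) hy
  have hy0 : y ≠ 0 := norm_pos_iff.1 hy.1
  have hC : 0 ≤ C := nonneg_of_mul_nonneg_left
    ((h.neg_laplacian_nonneg y hyR).trans (hexp y hyR)) (Real.exp_pos _)
  refine (hexp y hyR).trans ?_
  rw [← exp_half_logPot_zero hy0]
  gcongr
  exact hball ⟨by simpa using hy.2.trans_le (min_le_left _ _), hy0⟩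

variable [Fact (finrank ℝ E = 2)]

attribute [local instance] nontrivial_of_fact_finrank_eq_two

section Measure

variable [MeasurableSpace E] [BorelSpace E]

lemma NonnegSuperharmonicOn.exists_bump_hasRieszDecomposition
    (h : NonnegSuperharmonicOn v (puncturedBall E R)) (hR0 : 0 < R) (hR : R ≤ 1) :
    ∃ χ F H M, HasRieszDecomposition χ v F H M ∧ χ.rIn ≤ R ∧
      (∀ y ∈ puncturedBall E R, F y ≤ -Δ v y) ∧ ∀ y ∉ puncturedBall E R, F y = 0 := by
  let χ : ContDiffBump (0 : E) := ⟨R / 4, R / 2, by positivity, by linarith⟩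
  have hr : 3 * R / 4 < R := by linarith
  obtain ⟨M, H, hdec⟩ := h.exists_hasRieszDecomposition (χ := χ) hR hr
    (by simp only [χ]; linarith)
  exact ⟨χ, _, H, M, hdec, by simp only [χ]; linarith,
    fun y hy => indicator_apply_le' (fun _ => le_rfl) fun _ => h.neg_laplacian_nonneg y hy,
    fun y hy => indicator_of_notMem (fun h => hy (puncturedBall_mono hr.le h)) _⟩

lemma HasRieszDecomposition.exists_contDiff_eqOn {p q : ℝ≥0∞} [ENNReal.HolderConjugate p q]
    (h : HasRieszDecomposition χ v F H 0) (hF : MemLp F p) (hq : q < 2) :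
    ∃ g, ContDiff ℝ 1 g ∧ EqOn v g (puncturedBall E χ.rIn) :=
  ⟨fun z => (potMass E)⁻¹ * (H z + ∫ y, F y * bumpPot χ 0 (y - z)),
    contDiff_const.mul (h.contDiff.add (contDiff_integral_mul_bumpPot_zero h.rOut_lt_one hF hq)),
    fun z hz => (eq_inv_mul_iff_mul_eq₀ potMass_pos.ne').2 (by simpa using h.eq_add z hz)⟩

end Measure

lemma NonnegSuperharmonicOn.exists_tendsto_div_logPot
    (h : NonnegSuperharmonicOn v (puncturedBall E R)) (hR0 : 0 < R) (hR : R ≤ 1)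
    (hexp : ∀ y ∈ puncturedBall E R, -Δ v y ≤ C * Real.exp (K * v y)) (hK : 0 ≤ K) :
    ∃ m, 0 ≤ m ∧ Tendsto (fun z => v z / logPot 0 z) (𝓝[≠] 0) (𝓝 m) := by
  borelize E
  obtain ⟨χ, F, H, M, hdec, hχ, hF, -⟩ := h.exists_bump_hasRieszDecomposition hR0 hR
  have hlim := hdec.tendsto_div_logPot (fun y hy =>
    have hy' := puncturedBall_mono hχ hy
    (hF y hy').trans (hexp y hy')) hK
  refine ⟨_, ge_of_tendsto hlim ?_, hlim⟩
  filter_upwards [puncturedBall_mem_nhdsNE hR0] with z hz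
  exact div_nonneg (h.nonneg z hz) (logPot_zero_nonneg (hz.2.le.trans hR))

lemma NonnegSuperharmonicOn.exists_contDiff_eqOn
    (h : NonnegSuperharmonicOn v (puncturedBall E R)) (hR0 : 0 < R) (hR : R ≤ 1)
    (hexp : ∀ y ∈ puncturedBall E R, -Δ v y ≤ C * Real.exp (K * v y)) (hK : 0 ≤ K)
    (hlim : Tendsto (fun z => v z / logPot 0 z) (𝓝[≠] 0) (𝓝 0)) :
    ∃ ε g, 0 < ε ∧ ε ≤ R ∧ ContDiff ℝ 1 g ∧ EqOn v g (puncturedBall E ε) := by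
  borelize E
  obtain ⟨r, hr0, hr, hrpow⟩ := h.exists_neg_laplacian_le_rpow hR0 hexp hlim
  obtain ⟨χ, F, H, M, hdec, hχ, hF, hF0⟩ :=
    (h.mono (puncturedBall_mono hr)).exists_bump_hasRieszDecomposition hr0 (hr.trans hR)
  have hM : M / potMass E = 0 := tendsto_nhds_unique (hdec.tendsto_div_logPot (fun y hy =>
    (hF y (puncturedBall_mono hχ hy)).trans
      (hexp y (puncturedBall_mono (hχ.trans hr) hy))) hK) hlim
  obtain rfl : M = 0 := by simpa [potMass_pos.ne'] using hM
  have hpq : ENNReal.HolderConjugate (ENNReal.ofReal 3) (ENNReal.ofReal (3 / 2)) :=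
    Real.HolderConjugate.ennrealOfReal (Real.holderConjugate_iff.2 (by norm_num))
  have hLp : MemLp F (ENNReal.ofReal 3) := by
    refine ((memLp_indicator_ball_norm_rpow (E := E) (p := -1 / 2) (by simp)
      ENNReal.ofReal_ne_top ?_ r).const_mul C).mono' hdec.integrable.aestronglyMeasurable ?_
    · rw [Fact.out (p := finrank ℝ E = 2), ENNReal.toReal_ofReal (by norm_num)]
      norm_num
    · filter_upwards [volume.ae_ne 0] with y hy
      rw [Real.norm_of_nonneg (hdec.density_nonneg y)]
      by_cases hyr : y ∈ ball 0 r
      · have hyr' : y ∈ puncturedBall E r := ⟨norm_pos_iff.2 hy, by simpa using hyr⟩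
        simpa [indicator_of_mem hyr] using (hF y hyr').trans (hrpow y hyr')
      · simp [indicator_of_notMem hyr, hF0 y fun h => hyr (by simpa using h.2)]
  obtain ⟨g, hg, heq⟩ := hdec.exists_contDiff_eqOn (q := ENNReal.ofReal (3 / 2)) hLp
    (by rw [ENNReal.ofReal_lt_ofNat]; norm_num)
  exact ⟨χ.rIn, g, χ.rIn_pos, hχ.trans hr, hg, heq⟩

theorem taliaferro_dichotomy_bounded_below_general (hR : 0 < R)
    (hv : ContDiffOn ℝ 2 v (puncturedBall E R)) (hbdd : BddBelow (v '' puncturedBall E R))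
    (hineq : ∀ z ∈ puncturedBall E R, 0 ≤ -Δ v z ∧ -Δ v z ≤ C * Real.exp (K * v z)) :
    (∃ ε g, 0 < ε ∧ ε ≤ R ∧ ContDiffOn ℝ 1 g (ball 0 ε) ∧ EqOn v g (ball 0 ε \ {0})) ∨
      ∃ m, 0 < m ∧ Tendsto (fun z => v z / Real.log (1 / ‖z‖)) (𝓝[≠] 0) (𝓝 m) := by
  obtain ⟨c, hc⟩ := hbdd
  have hR₁ : 0 < min R 1 := lt_min hR one_pos
  have hsub : puncturedBall E (min R 1) ⊆ puncturedBall E R := puncturedBall_mono (min_le_left _ _)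
  have h : NonnegSuperharmonicOn (fun x => v x - c) (puncturedBall E (min R 1)) :=
    (NonnegSuperharmonicOn.sub_const isOpen_puncturedBall hv (forall_mem_image.1 hc)
      fun z hz => (hineq z hz).1).mono hsub
  have hexp : ∀ z ∈ puncturedBall E (min R 1), -Δ (fun x => v x - c) z ≤
      C * Real.exp (K * c) * Real.exp (max K 0 * (v z - c)) := fun z hz =>
    neg_laplacian_sub_const_le (hv.contDiffAt (isOpen_puncturedBall.mem_nhds (hsub hz)))
      (hc (mem_image_of_mem v (hsub hz))) (hineq z (hsub hz)).1 (hineq z (hsub hz)).2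
  have hK := le_max_right K 0
  obtain ⟨m, hm0, hm⟩ := h.exists_tendsto_div_logPot hR₁ (min_le_right _ _) hexp hK
  rcases hm0.eq_or_lt with rfl | hm0
  · obtain ⟨ε, g, hε, hεR, hg, heq⟩ :=
      h.exists_contDiff_eqOn hR₁ (min_le_right _ _) hexp hK hm
    refine .inl ⟨ε, fun z => g z + c, hε, hεR.trans (min_le_left _ _),
      (hg.add contDiff_const).contDiffOn, fun z hz => eq_add_of_sub_eq (heq ?_)⟩
    exact ⟨norm_pos_iff.2 hz.2, by simpa using hz.1⟩
  · refine .inr ⟨m, hm0, ?_⟩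
    have hlim := hm.add (tendsto_logPot_zero_atTop.const_div_atTop c)
    simpa [← add_div, logPot_zero_left] using hlim

end Dichotomy

lemma lap_eq_laplacian {v : EuclideanSpace ℝ (Fin 2) → ℝ} {z : EuclideanSpace ℝ (Fin 2)}
    (hv : ContDiffAt ℝ 2 v z) : lap v z = Δ v z := by
  simp [lap, laplacian_eq_sum_fderiv_fderiv (EuclideanSpace.basisFun (Fin 2) ℝ),
    fderiv_clm_apply (differentiableAt_fderiv hv) (differentiableAt_const _)]

/-- (Taliaferro) Let `v` be a `C²` solution, bounded from below, of `0 ≤ -Δv ≤ C e^{2v}` on a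
punctured disk `{0 < |z| < R}` around the origin of `ℝ²`. Then either `v` extends to a
`C¹` function on a neighborhood of the origin, or `v(z)/log(1/|z|) → m₁` as `|z| → 0⁺`
for some finite positive number `m₁`. -/
theorem taliaferro_dichotomy_bounded_below
    (R C : ℝ) (hR : 0 < R) (hC : 0 < C)
    (v : EuclideanSpace ℝ (Fin 2) → ℝ)
    (hv : ContDiffOn ℝ 2 v {z | 0 < ‖z‖ ∧ ‖z‖ < R})
    (hbdd : ∃ c : ℝ, ∀ z : EuclideanSpace ℝ (Fin 2), 0 < ‖z‖ → ‖z‖ < R → c ≤ v z)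
    (hineq : ∀ z : EuclideanSpace ℝ (Fin 2), 0 < ‖z‖ → ‖z‖ < R →
      0 ≤ -lap v z ∧ -lap v z ≤ C * Real.exp (2 * v z)) :
    (∃ ε : ℝ, ∃ g : EuclideanSpace ℝ (Fin 2) → ℝ, 0 < ε ∧ ε ≤ R ∧
        ContDiffOn ℝ 1 g (ball (0 : EuclideanSpace ℝ (Fin 2)) ε) ∧
        Set.EqOn v g (ball (0 : EuclideanSpace ℝ (Fin 2)) ε \ {0})) ∨
    (∃ m₁ : ℝ, 0 < m₁ ∧
      Tendsto (fun z => v z / Real.log (1 / ‖z‖))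
        (nhdsWithin (0 : EuclideanSpace ℝ (Fin 2)) {0}ᶜ) (nhds m₁)) :=
  have : Fact (finrank ℝ (EuclideanSpace ℝ (Fin 2)) = 2) := ⟨finrank_euclideanSpace_fin⟩
  taliaferro_dichotomy_bounded_below_general hR hv
    (hbdd.imp fun _ hc => forall_mem_image.2 fun z hz => hc z hz.1 hz.2)
    fun z hz => lap_eq_laplacian (hv.contDiffAt (isOpen_puncturedBall.mem_nhds hz)) ▸
      hineq z hz.1 hz.2
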